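/- Let X be a Peano space and T a maximal cyclic subset of X. Then the map r : X → T defined by r(x) = x for x ∈ T, and r(x) = the unique boundary point of the connected component of X \ T containing x otherwise, is continuous; in particular T is a retract of X. -/

import Mathlib

open Metric Set

/-- A Jordan curve: a subset homeomorphic to the circle. -/
def IsJordanCurve {X : Type} [TopologicalSpace X] (J : Set X) : Prop :=
  Nonempty (AddCircle (1 : ℝ) ≃ₜ J)

/-- A set is cyclicly connected if every pair of its points lies on a Jordan curve in it. -/
def CyclicallyConnected {X : Type} [TopologicalSpace X] (C : Set X) : Prop :=
  ∀ x ∈ C, ∀ y ∈ C, ∃ J : Set X, J ⊆ C ∧ IsJordanCurve J ∧ x ∈ J ∧ y ∈ J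

/-- A maximal cyclic subset: non-degenerate, cyclicly connected, and not a proper subset
of any cyclicly connected subset. -/
def MaximalCyclic {X : Type} [TopologicalSpace X] (T : Set X) : Prop :=
  ¬ T.Subsingleton ∧ CyclicallyConnected T ∧
    ∀ C : Set X, CyclicallyConnected C → T ⊆ C → C = T

open Topology

theorem IsPreconnected.inter_frontier_nonempty {X : Type*} [TopologicalSpace X] {V t : Set X}
    (hV : IsPreconnected V) (h1 : (V ∩ t).Nonempty) (h2 : (V ∩ tᶜ).Nonempty) :
    (V ∩ frontier t).Nonempty := by
  by_contra h
  have hf : ∀ x ∈ V, x ∉ frontier t := fun x hx hx' => h ⟨x, hx, hx'⟩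
  obtain ⟨x, hx, hxt⟩ := h1
  obtain ⟨y, hy, hyt⟩ := h2
  have key : ∀ z ∈ V, z ∈ interior t ∨ z ∈ (closure t)ᶜ := by
    intro z hz
    have := hf z hz
    simp only [frontier, mem_sdiff, not_and, not_not] at this
    by_cases hc : z ∈ closure t
    · exact Or.inl (this hc)
    · exact Or.inr hc
  obtain ⟨z, hz, hz1, hz2⟩ := hV (interior t) (closure t)ᶜ isOpen_interior
    isClosed_closure.isOpen_compl key
    ⟨x, hx, (key x hx).resolve_right fun h => h (subset_closure hxt)⟩
    ⟨y, hy, (key y hy).resolve_left fun h => hyt (interior_subset h)⟩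
  exact hz2 (subset_closure (interior_subset hz1))

section Arc

variable {X : Type} [MetricSpace X]

/-- `S` is a (possibly degenerate) arc from `x` to `y`. -/
def IsArc (S : Set X) (x y : X) : Prop :=
  ∃ (a b : ℝ) (γ : ℝ → X), a ≤ b ∧ ContinuousOn γ (Icc a b) ∧ InjOn γ (Icc a b) ∧
    γ a = x ∧ γ b = y ∧ γ '' Icc a b = S

theorem isArc_image {γ : ℝ → X} {a b c d : ℝ} (hc : ContinuousOn γ (Icc a b))
    (hi : InjOn γ (Icc a b)) (hac : a ≤ c) (hcd : c ≤ d) (hdb : d ≤ b) :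
    IsArc (γ '' Icc c d) (γ c) (γ d) :=
  ⟨c, d, γ, hcd, hc.mono (Icc_subset_Icc hac hdb), hi.mono (Icc_subset_Icc hac hdb), rfl, rfl, rfl⟩

variable {S S' D D' C : Set X} {x y z w : X}

theorem isArc_singleton (x : X) : IsArc {x} x x :=
  ⟨0, 0, fun _ => x, le_rfl, continuousOn_const, by simp, rfl, rfl, by simp⟩

theorem IsArc.symm (h : IsArc S x y) : IsArc S y x := by
  obtain ⟨a, b, γ, hab, hc, hi, rfl, rfl, rfl⟩ := h
  have hm : MapsTo (fun t : ℝ => -t) (Icc (-b) (-a)) (Icc a b) := fun t ht => by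
    constructor <;> linarith [ht.1, ht.2]
  refine ⟨-b, -a, fun t => γ (-t), by linarith, hc.comp continuous_neg.continuousOn hm, ?_, by simp,
    by simp, ?_⟩
  · intro s hs t ht hst
    exact neg_injective (hi (hm hs) (hm ht) hst)
  · ext p
    constructor
    · rintro ⟨t, ht, rfl⟩
      exact ⟨-t, hm ht, rfl⟩
    · rintro ⟨t, ht, rfl⟩
      exact ⟨-t, ⟨by linarith [ht.2], by linarith [ht.1]⟩, by simp⟩

theorem IsArc.left_mem (h : IsArc S x y) : x ∈ S := by
  obtain ⟨a, b, γ, hab, hc, hi, rfl, rfl, rfl⟩ := h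
  exact ⟨a, left_mem_Icc.2 hab, rfl⟩

theorem IsArc.right_mem (h : IsArc S x y) : y ∈ S := h.symm.left_mem

theorem IsArc.isCompact (h : IsArc S x y) : IsCompact S := by
  obtain ⟨a, b, γ, hab, hc, hi, rfl, rfl, rfl⟩ := h
  exact isCompact_Icc.image_of_continuousOn hc

theorem IsArc.isClosed (h : IsArc S x y) : IsClosed S := h.isCompact.isClosed

theorem IsArc.isPathConnected (h : IsArc S x y) : IsPathConnected S := by
  obtain ⟨a, b, γ, hab, hc, hi, rfl, rfl, rfl⟩ := h
  exact ((convex_Icc a b).isPathConnected ⟨a, left_mem_Icc.2 hab⟩).image' hc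

theorem IsArc.isPreconnected (h : IsArc S x y) : IsPreconnected S :=
  h.isPathConnected.isConnected.isPreconnected

theorem IsArc.joinedIn (h : IsArc S x y) : JoinedIn S x y :=
  h.isPathConnected.joinedIn _ h.left_mem _ h.right_mem

theorem IsArc.eq_singleton (h : IsArc S x x) : S = {x} := by
  obtain ⟨a, b, γ, hab, hc, hi, h1, h2, rfl⟩ := h
  have : a = b := hi (left_mem_Icc.2 hab) (right_mem_Icc.2 hab) (h1.trans h2.symm)
  subst this
  simp [h1]

/-- Cutting an arc at one of its points. -/
theorem IsArc.split (h : IsArc S x y) (hz : z ∈ S) :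
    ∃ S₁ S₂, IsArc S₁ x z ∧ IsArc S₂ z y ∧ S₁ ∪ S₂ = S ∧ S₁ ∩ S₂ = {z} := by
  obtain ⟨a, b, γ, hab, hc, hi, rfl, rfl, rfl⟩ := h
  obtain ⟨t, ht, rfl⟩ := hz
  refine ⟨γ '' Icc a t, γ '' Icc t b, isArc_image hc hi le_rfl ht.1 ht.2,
    isArc_image hc hi ht.1 ht.2 le_rfl, ?_, ?_⟩
  · rw [← image_union, Icc_union_Icc_eq_Icc ht.1 ht.2]
  · rw [← hi.image_inter (Icc_subset_Icc le_rfl ht.2) (Icc_subset_Icc ht.1 le_rfl)]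
    rw [Icc_inter_Icc, max_eq_right ht.1, min_eq_left ht.2, Icc_self, image_singleton]

/-- Concatenating two arcs that only share the common end point. -/
theorem IsArc.trans (h : IsArc S x y) (h' : IsArc S' y z) (hS : S ∩ S' ⊆ {y}) :
    IsArc (S ∪ S') x z := by
  obtain ⟨a, b, γ, hab, hc, hi, rfl, hb, rfl⟩ := h
  obtain ⟨c, d, δ, hcd, hc', hi', hcy, rfl, rfl⟩ := h'
  set e : ℝ → X := fun t => if t ≤ b then γ t else δ (t - b + c) with he
  have e1 : ∀ t ∈ Icc a b, e t = γ t := fun t ht => if_pos ht.2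
  have e2 : ∀ t ∈ Icc b (b + d - c), e t = δ (t - b + c) := by
    intro t ht
    rcases ht.1.eq_or_lt with rfl | h
    · simp [he, hb, hcy]
    · exact if_neg (not_le.2 h)
  have hm : MapsTo (fun t : ℝ => t - b + c) (Icc b (b + d - c)) (Icc c d) := fun t ht => by
    constructor <;> linarith [ht.1, ht.2]
  have hU : Icc a (b + d - c) = Icc a b ∪ Icc b (b + d - c) :=
    (Icc_union_Icc_eq_Icc hab (by linarith)).symm
  have i1 : e '' Icc a b = γ '' Icc a b := image_congr e1
  have i2 : e '' Icc b (b + d - c) = δ '' Icc c d := by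
    rw [image_congr e2]
    ext p
    constructor
    · rintro ⟨t, ht, rfl⟩
      exact ⟨_, hm ht, rfl⟩
    · rintro ⟨t, ht, rfl⟩
      exact ⟨t - c + b, ⟨by linarith [ht.1], by linarith [ht.2]⟩, by simp⟩
  refine ⟨a, b + d - c, e, by linarith, ?_, ?_, e1 a (left_mem_Icc.2 hab), ?_, ?_⟩
  · rw [hU]
    refine ContinuousOn.union_of_isClosed ?_ ?_ isClosed_Icc isClosed_Icc
    · exact hc.congr e1
    · exact (hc'.comp (by fun_prop) hm).congr e2
  · have key : ∀ s ∈ Icc a b, ∀ t ∈ Icc b (b + d - c), e s = e t → s = t := by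
      intro s hs t ht hst
      have h1 : γ s = y := hS ⟨⟨s, hs, rfl⟩, by
        rw [← e1 s hs, hst, ← i2]; exact ⟨t, ht, rfl⟩⟩
      have h2 : s = b := hi hs (right_mem_Icc.2 hab) (h1.trans hb.symm)
      rw [e1 s hs, h1, e2 t ht, ← hcy] at hst
      have := hi' (left_mem_Icc.2 hcd) (hm ht) hst
      simp only at this
      linarith
    rw [hU]
    rintro s (hs | hs) t (ht | ht) hst
    · rw [e1 s hs, e1 t ht] at hst
      exact hi hs ht hst
    · exact key s hs t ht hst
    · exact (key t ht s hs hst.symm).symm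
    · rw [e2 s hs, e2 t ht] at hst
      have := hi' (hm hs) (hm ht) hst
      simp only at this
      linarith
  · rw [e2 _ (right_mem_Icc.2 (by linarith))]
    congr 1; ring
  · rw [hU, image_union, i1, i2]

theorem IsArc.exists_subarc (h : IsArc S x y) (hz : z ∈ S) (hw : w ∈ S) :
    ∃ S' ⊆ S, IsArc S' z w := by
  obtain ⟨S₁, S₂, h1, h2, rfl, -⟩ := h.split hz
  rcases hw with hw | hw
  · obtain ⟨A, B, -, hB, rfl, -⟩ := h1.split hw
    exact ⟨B, fun p hp => Or.inl (Or.inr hp), hB.symm⟩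
  · obtain ⟨A, B, hA, -, rfl, -⟩ := h2.split hw
    exact ⟨A, fun p hp => Or.inr (Or.inl hp), hA⟩

theorem IsArc.exists_firstHit (h : IsArc S x y) (hC : IsClosed C) (hSC : (S ∩ C).Nonempty) :
    ∃ z ∈ C, ∃ S₁ S₂, IsArc S₁ x z ∧ IsArc S₂ z y ∧ S₁ ∪ S₂ = S ∧ S₁ ∩ S₂ = {z} ∧
      S₁ ∩ C = {z} := by
  obtain ⟨a, b, γ, hab, hc, hi, rfl, rfl, rfl⟩ := h
  have hcl : IsCompact (Icc a b ∩ γ ⁻¹' C) :=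
    isCompact_Icc.of_isClosed_subset (hc.preimage_isClosed_of_isClosed isClosed_Icc hC)
      inter_subset_left
  obtain ⟨_, ⟨s, hs, rfl⟩, hsC⟩ := hSC
  obtain ⟨t, ⟨ht, htC⟩, hmin⟩ := hcl.exists_isLeast ⟨s, hs, hsC⟩
  refine ⟨γ t, htC, γ '' Icc a t, γ '' Icc t b, isArc_image hc hi le_rfl ht.1 ht.2,
    isArc_image hc hi ht.1 ht.2 le_rfl, ?_, ?_, ?_⟩
  · rw [← image_union, Icc_union_Icc_eq_Icc ht.1 ht.2]
  · rw [← hi.image_inter (Icc_subset_Icc le_rfl ht.2) (Icc_subset_Icc ht.1 le_rfl)]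
    rw [Icc_inter_Icc, max_eq_right ht.1, min_eq_left ht.2, Icc_self, image_singleton]
  · apply Subset.antisymm
    · rintro _ ⟨⟨u, hu, rfl⟩, huC⟩
      have := hmin ⟨⟨hu.1, hu.2.trans ht.2⟩, huC⟩
      rw [le_antisymm hu.2 this]; rfl
    · rintro _ rfl
      exact ⟨⟨t, ⟨ht.1, le_rfl⟩, rfl⟩, htC⟩

/-- The piece of an arc around a point off a closed set containing both ends. -/
theorem IsArc.exists_excursion (h : IsArc S x y) (hC : IsClosed C) (hx : x ∈ C) (hy : y ∈ C)
    (hz : z ∈ S) (hzC : z ∉ C) :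
    ∃ G ⊆ S, ∃ c ∈ C, ∃ d ∈ C, c ≠ d ∧ IsArc G c d ∧ z ∈ G ∧ G ∩ C = {c, d} := by
  obtain ⟨S₁, S₂, h1, h2, rfl, h12⟩ := h.split hz
  obtain ⟨c, hc, A, A', hA, -, hAS, -, hAC⟩ := h1.symm.exists_firstHit hC ⟨x, h1.left_mem, hx⟩
  obtain ⟨d, hd, B, B', hB, -, hBS, -, hBC⟩ := h2.exists_firstHit hC ⟨y, h2.right_mem, hy⟩
  have hAB : A ∩ B ⊆ {z} := by
    rw [← h12, ← hAS, ← hBS]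
    exact inter_subset_inter subset_union_left subset_union_left
  refine ⟨A ∪ B, ?_, c, hc, d, hd, ?_, hA.symm.trans hB hAB, Or.inl hA.left_mem, ?_⟩
  · rw [← hAS, ← hBS]
    exact union_subset_union subset_union_left subset_union_left
  · rintro rfl
    have : c = z := hAB ⟨hA.right_mem, hB.right_mem⟩
    exact hzC (this ▸ hc)
  · rw [union_inter_distrib_right, hAC, hBC]; rfl

theorem IsArc.mem_of_separates {S₁ S₂ : Set X} (h1 : IsArc S₁ x z) (h2 : IsArc S₂ z y)
    (h12 : S₁ ∩ S₂ = {z}) (hD : IsPreconnected D) (hDS : D ⊆ S₁ ∪ S₂) (hD1 : (D ∩ S₁).Nonempty)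
    (hD2 : (D ∩ S₂).Nonempty) : z ∈ D := by
  obtain ⟨p, hp, hp'⟩ := isPreconnected_closed_iff.1 hD S₁ S₂ h1.isClosed h2.isClosed hDS hD1 hD2
  rw [h12] at hp'
  exact hp' ▸ hp

theorem IsArc.eq_of_isPreconnected (h : IsArc S x y) (hD : IsPreconnected D) (hDS : D ⊆ S)
    (hx : x ∈ D) (hy : y ∈ D) : D = S := by
  refine hDS.antisymm fun z hz => ?_
  obtain ⟨S₁, S₂, h1, h2, rfl, h12⟩ := h.split hz
  exact h1.mem_of_separates h2 h12 hD hDS ⟨x, hx, h1.left_mem⟩ ⟨y, hy, h2.right_mem⟩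

theorem IsArc.subset_or_subset (h : IsArc S x y) (hD : IsPreconnected D) (hDS : D ⊆ S)
    (hD' : IsPreconnected D') (hDS' : D' ⊆ S) (hx : x ∈ D) (hx' : x ∈ D') : D ⊆ D' ∨ D' ⊆ D := by
  by_contra! hne
  obtain ⟨z, hz, hz'⟩ := not_subset.1 hne.1
  obtain ⟨w, hw, hw'⟩ := not_subset.1 hne.2
  obtain ⟨S₁, S₂, h1, h2, rfl, h12⟩ := h.split (hDS hz)
  rcases hDS' hw with hw1 | hw2
  · obtain ⟨A, B, hA, hB, rfl, hAB⟩ := h1.split hw1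
    have h3 : IsArc (B ∪ S₂) w y := hB.trans h2 (by
      rw [← h12]; exact inter_subset_inter subset_union_right Subset.rfl)
    have h4 : A ∩ (B ∪ S₂) = {w} := by
      apply Subset.antisymm
      · rintro p ⟨hpA, hpB | hpS⟩
        · rw [← hAB]; exact ⟨hpA, hpB⟩
        · have hpz : p = z := by
            have : p ∈ ({z} : Set X) := by rw [← h12]; exact ⟨Or.inl hpA, hpS⟩
            exact this
          subst hpz
          rw [← hAB]; exact ⟨hpA, hB.right_mem⟩
      · rintro _ rfl
        exact ⟨hA.right_mem, Or.inl hB.left_mem⟩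
    refine hw' (hA.mem_of_separates h3 h4 hD ?_ ⟨x, hx, hA.left_mem⟩ ⟨z, hz, Or.inl hB.right_mem⟩)
    rwa [← union_assoc]
  · exact hz' (h1.mem_of_separates h2 h12 hD' hDS' ⟨x, hx', h1.left_mem⟩ ⟨w, hw, hw2⟩)

end Arc

section Reparametrization

variable {X : Type} [MetricSpace X]

/-- A bounded curve whose fibres are intervals can be reparametrized to be injective. -/
theorem isArc_image_of_fibers_ordConnected {g : ℝ → X} (hg : Continuous g)
    (hb : Bornology.IsBounded (range g)) (hfib : ∀ s u t, s ≤ u → u ≤ t → g s = g t → g u = g s)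
    {a b : ℝ} (hab : a ≤ b) : IsArc (g '' Icc a b) (g a) (g b) := by
  obtain ⟨D, hD⟩ := Metric.isBounded_iff.1 hb
  have hD' : ∀ s t, dist (g s) (g t) ≤ D := fun s t => hD ⟨s, rfl⟩ ⟨t, rfl⟩
  set φ : ℝ → ℝ → ℝ := fun q t => sSup ((fun u => dist (g q) (g u)) '' Icc q (max t q)) with hφ
  have hbdd : ∀ q t, BddAbove ((fun u => dist (g q) (g u)) '' Icc q (max t q)) := by
    rintro q t
    refine ⟨D, ?_⟩
    rintro _ ⟨u, -, rfl⟩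
    exact hD' q u
  have hne : ∀ q t, ((fun u => dist (g q) (g u)) '' Icc q (max t q)).Nonempty := fun q t =>
    ⟨_, q, ⟨le_rfl, le_max_right _ _⟩, rfl⟩
  have hle : ∀ q t u, q ≤ u → u ≤ max t q → dist (g q) (g u) ≤ φ q t := fun q t u h1 h2 =>
    le_csSup (hbdd q t) ⟨u, ⟨h1, h2⟩, rfl⟩
  have hφD : ∀ q t, φ q t ≤ D := fun q t => csSup_le (hne q t) (by
    rintro _ ⟨u, -, rfl⟩
    exact hD' q u)
  have hφ0 : ∀ q t, 0 ≤ φ q t := fun q t =>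
    dist_nonneg.trans (hle q t q le_rfl (le_max_right _ _))
  have hφmono : ∀ q, Monotone (φ q) := fun q s t hst =>
    csSup_le_csSup (hbdd q t) (hne q s)
      (image_mono (Icc_subset_Icc le_rfl (max_le_max_right q hst)))
  have hφc : ∀ q, Continuous (φ q) := by
    intro q
    have e : φ q = fun t => sSup ((fun θ : ℝ => dist (g q) (g (q + θ * (max t q - q)))) ''
        Icc 0 1) := by
      funext t
      have hq : q ≤ max t q := le_max_right _ _
      simp only [hφ]
      congr 1
      ext p
      constructor
      · rintro ⟨u, hu, rfl⟩
        rcases hq.eq_or_lt with h | h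
        · refine ⟨0, by simp, ?_⟩
          have : u = q := le_antisymm (hu.2.trans h.symm.le) hu.1
          simp [this]
        · refine ⟨(u - q) / (max t q - q), ⟨div_nonneg (by linarith [hu.1]) (by linarith), ?_⟩, ?_⟩
          · rw [div_le_one (by linarith)]; linarith [hu.2]
          · simp only
            rw [div_mul_cancel₀ _ (by linarith)]
            congr 2; ring
      · rintro ⟨θ, hθ, rfl⟩
        refine ⟨q + θ * (max t q - q), ⟨?_, ?_⟩, rfl⟩
        · nlinarith [hθ.1]
        · nlinarith [hθ.2]
    rw [e]
    apply isCompact_Icc.continuous_sSup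
    simp only [Function.HasUncurry.uncurry, id]
    fun_prop
  set Φ : ℝ → ℝ := fun t => ∑' n : ℕ, (1 / 2 : ℝ) ^ n * φ (TopologicalSpace.denseSeq ℝ n) t with hΦ
  have hs2 : Summable fun n : ℕ => (1 / 2 : ℝ) ^ n * D := summable_geometric_two.mul_right D
  have hbound : ∀ (n : ℕ) t, (1 / 2 : ℝ) ^ n * φ (TopologicalSpace.denseSeq ℝ n) t ≤
      (1 / 2 : ℝ) ^ n * D := fun n t => mul_le_mul_of_nonneg_left (hφD _ _) (by positivity)
  have hnn : ∀ (n : ℕ) t, 0 ≤ (1 / 2 : ℝ) ^ n * φ (TopologicalSpace.denseSeq ℝ n) t :=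
    fun n t => mul_nonneg (by positivity) (hφ0 _ _)
  have hsum : ∀ t, Summable fun n : ℕ => (1 / 2 : ℝ) ^ n * φ (TopologicalSpace.denseSeq ℝ n) t :=
    fun t => Summable.of_nonneg_of_le (fun n => hnn n t) (fun n => hbound n t) hs2
  have hΦc : Continuous Φ := continuous_tsum (fun n => (hφc _).const_mul _) hs2 fun n t => by
    rw [Real.norm_of_nonneg (hnn n t)]; exact hbound n t
  have hterm : ∀ s t, s ≤ t → ∀ n : ℕ, (1 / 2 : ℝ) ^ n * φ (TopologicalSpace.denseSeq ℝ n) s ≤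
      (1 / 2 : ℝ) ^ n * φ (TopologicalSpace.denseSeq ℝ n) t := fun s t hst n =>
    mul_le_mul_of_nonneg_left (hφmono _ hst) (by positivity)
  have hΦm : Monotone Φ := fun s t hst => (hsum s).tsum_le_tsum (hterm s t hst) (hsum t)
  have hΦlt : ∀ s t, s ≤ t → g s ≠ g t → Φ s < Φ t := by
    intro s t hst hne'
    have hlt : s < t := hst.lt_of_ne fun h => hne' (by rw [h])
    have hop : IsOpen {q | g q ≠ g t} := isOpen_ne_fun hg continuous_const
    obtain ⟨q, ⟨hq1, hq2, hq3⟩⟩ :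
        ∃ n, TopologicalSpace.denseSeq ℝ n ∈ {q | g q ≠ g t} ∩ Ioo s t := by
      obtain ⟨ε, hε, hball⟩ := Metric.isOpen_iff.1 hop s hne'
      have hU : (Ioo s (min t (s + ε))).Nonempty := nonempty_Ioo.2 (by
        rw [lt_min_iff]; exact ⟨hlt, by linarith⟩)
      obtain ⟨n, hq⟩ := (TopologicalSpace.denseRange_denseSeq ℝ).exists_mem_open isOpen_Ioo hU
      have h1 := (lt_min_iff.1 hq.2)
      refine ⟨n, hball ?_, hq.1, h1.1⟩
      rw [mem_ball, Real.dist_eq, abs_lt]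
      constructor <;> linarith [hq.1, h1.2]
    refine Summable.tsum_lt_tsum (i := q) (hterm s t hst) ?_ (hsum s) (hsum t)
    refine mul_lt_mul_of_pos_left ?_ (by positivity)
    have h0 : φ (TopologicalSpace.denseSeq ℝ q) s = 0 := by
      simp only [hφ]
      rw [max_eq_right hq2.le]
      simp
    rw [h0]
    exact (dist_pos.2 hq1).trans_le (hle _ _ _ hq3.le (le_max_left _ _))
  have hΦeq : ∀ s t, g s = g t → Φ s = Φ t := by
    have aux : ∀ s t, s ≤ t → g s = g t → Φ t ≤ Φ s := by
      intro s t hst h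
      refine (hsum t).tsum_le_tsum (fun n => mul_le_mul_of_nonneg_left ?_ (by positivity)) (hsum s)
      refine csSup_le (hne _ t) ?_
      rintro _ ⟨u, hu, rfl⟩
      set q := TopologicalSpace.denseSeq ℝ n
      rcases le_or_gt u (max s q) with h1 | h1
      · exact hle _ _ _ hu.1 h1
      · have hut : u ≤ t := by
          rcases le_max_iff.1 hu.2 with h2 | h2
          · exact h2
          · exact absurd h1 (not_lt.2 (h2.trans (le_max_right _ _)))
        have hgu : g u = g s := hfib s u t ((le_max_left _ _).trans h1.le) hut h
        have hgm : g (max s q) = g s := hfib s _ t (le_max_left _ _) (h1.le.trans hut) h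
        simp only
        rw [hgu, ← hgm]
        exact hle _ _ _ (le_max_right _ _) le_rfl
    intro s t h
    rcases le_total s t with hst | hst
    · exact le_antisymm (hΦm hst) (aux s t hst h)
    · exact le_antisymm (aux t s hst h.symm) (hΦm hst)
  have hΦinj : ∀ s t, Φ s = Φ t → g s = g t := by
    intro s t h
    by_contra hne'
    rcases le_total s t with hst | hst
    · exact (hΦlt s t hst hne').ne h
    · exact (hΦlt t s hst (Ne.symm hne')).ne h.symm
  have hsurj : ∀ w ∈ Icc (Φ a) (Φ b), ∃ t ∈ Icc a b, Φ t = w := fun w hw =>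
    intermediate_value_Icc hab hΦc.continuousOn hw
  choose! ψ hψ hψ' using hsurj
  have hmaps : ∀ t ∈ Icc a b, Φ t ∈ Icc (Φ a) (Φ b) := fun t ht => ⟨hΦm ht.1, hΦm ht.2⟩
  have hcomp : ∀ t ∈ Icc a b, g (ψ (Φ t)) = g t := fun t ht => hΦinj _ _ (hψ' _ (hmaps t ht))
  refine ⟨Φ a, Φ b, g ∘ ψ, hΦm hab, ?_, ?_, hcomp a (left_mem_Icc.2 hab),
    hcomp b (right_mem_Icc.2 hab), ?_⟩
  · rw [continuousOn_iff_isClosed]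
    intro C hC
    refine ⟨Φ '' (Icc a b ∩ g ⁻¹' C), ?_, ?_⟩
    · exact ((isCompact_Icc.inter_right (hC.preimage hg)).image hΦc).isClosed
    · ext w
      constructor
      · rintro ⟨h1, h2⟩
        exact ⟨⟨ψ w, ⟨hψ w h2, h1⟩, hψ' w h2⟩, h2⟩
      · rintro ⟨⟨t, ⟨ht, htC⟩, rfl⟩, h2⟩
        refine ⟨?_, h2⟩
        rw [mem_preimage, Function.comp_apply, hcomp t ht]
        exact htC
  · intro w hw w' hw' h
    rw [← hψ' w hw, ← hψ' w' hw']
    exact hΦeq _ _ h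
  · ext p
    constructor
    · rintro ⟨w, hw, rfl⟩
      exact ⟨ψ w, hψ w hw, rfl⟩
    · rintro ⟨t, ht, rfl⟩
      exact ⟨Φ t, hmaps t ht, hcomp t ht⟩

end Reparametrization

section PathToArc

variable {X : Type}

/-- Closed subsets of the unit interval containing the ends and whose gaps are closed up by `f`. -/
def IsGapClosed (f : ℝ → X) (K : Set ℝ) : Prop :=
  IsClosed K ∧ K ⊆ Icc 0 1 ∧ 0 ∈ K ∧ 1 ∈ K ∧
    ∀ s ∈ K, ∀ t ∈ K, s < t → Disjoint (Ioo s t) K → f s = f t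

theorem IsGapClosed.exists_greatest {f : ℝ → X} {K : Set ℝ} (hK : IsGapClosed f K) {t : ℝ}
    (ht : 0 ≤ t) : ∃ m, IsGreatest (K ∩ Iic t) m :=
  ((isCompact_Icc.of_isClosed_subset hK.1 hK.2.1).inter_right isClosed_Iic).exists_isGreatest
    ⟨0, hK.2.2.1, ht⟩

theorem IsGapClosed.exists_least {f : ℝ → X} {K : Set ℝ} (hK : IsGapClosed f K) {t : ℝ}
    (ht : t ≤ 1) : ∃ m, IsLeast (K ∩ Ici t) m :=
  ((isCompact_Icc.of_isClosed_subset hK.1 hK.2.1).inter_right isClosed_Ici).exists_isLeast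
    ⟨1, hK.2.2.2.1, ht⟩

theorem IsGapClosed.eq_of_disjoint {f : ℝ → X} {K : Set ℝ} (hK : IsGapClosed f K) {u m n : ℝ}
    (hm : IsGreatest (K ∩ Iic u) m) (hn : IsLeast (K ∩ Ici u) n) : f m = f n := by
  have hmn : m ≤ n := le_trans hm.1.2 hn.1.2
  rcases hmn.eq_or_lt with h | h
  · rw [h]
  refine hK.2.2.2.2 m hm.1.1 n hn.1.1 h (disjoint_left.2 fun k hk hkK => ?_)
  rcases le_total k u with h1 | h1
  · exact not_lt.2 (hm.2 ⟨hkK, h1⟩) hk.1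
  · exact not_lt.2 (hn.2 ⟨hkK, h1⟩) hk.2

theorem exists_minimal_isGapClosed [MetricSpace X] {f : ℝ → X} (hf : Continuous f) :
    ∃ K, Minimal (IsGapClosed f) K := by
  refine zorn_superset {K | IsGapClosed f K} ?_
  intro c hc hchain
  rcases c.eq_empty_or_nonempty with rfl | hcn
  · refine ⟨Icc 0 1, ⟨isClosed_Icc, Subset.rfl, by simp, by simp, ?_⟩, by simp⟩
    intro s hs t ht hst hd
    obtain ⟨u, hu⟩ := nonempty_Ioo.2 hst
    exact absurd ⟨hs.1.trans hu.1.le, hu.2.le.trans ht.2⟩ (disjoint_left.1 hd hu)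
  refine ⟨⋂₀ c, ⟨isClosed_sInter fun K hK => (hc hK).1, ?_, fun K hK => (hc hK).2.2.1,
    fun K hK => (hc hK).2.2.2.1, ?_⟩, fun K hK => sInter_subset_of_mem hK⟩
  · obtain ⟨K, hK⟩ := hcn
    exact (sInter_subset_of_mem hK).trans (hc hK).2.1
  intro s hs t ht hst hd
  refine eq_of_forall_dist_le fun ε hε => ?_
  obtain ⟨δ₁, hδ₁, h1⟩ := Metric.continuous_iff.1 hf s (ε / 2) (by linarith)
  obtain ⟨δ₂, hδ₂, h2⟩ := Metric.continuous_iff.1 hf t (ε / 2) (by linarith)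
  obtain ⟨η, hη, hη'⟩ := exists_between
    (show (0 : ℝ) < min (min δ₁ δ₂) ((t - s) / 2) from
      lt_min (lt_min hδ₁ hδ₂) (by linarith))
  obtain ⟨hη₁, hη₂⟩ := lt_min_iff.1 hη'
  obtain ⟨hη₁, hη₃⟩ := lt_min_iff.1 hη₁
  have hcne : Nonempty c := hcn.to_subtype
  have hempty : Icc (s + η) (t - η) ∩ ⋂ K : c, (K : Set ℝ) = ∅ := by
    rw [← sInter_eq_iInter, ← disjoint_iff_inter_eq_empty]
    have hsub : Icc (s + η) (t - η) ⊆ Ioo s t := fun u hu =>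
      ⟨by linarith [hu.1], by linarith [hu.2]⟩
    exact hd.mono_left hsub
  have hdir : Directed (· ⊇ ·) fun K : c => (K : Set ℝ) := fun A B => by
    rcases hchain.total A.2 B.2 with h | h
    · exact ⟨A, Subset.rfl, h⟩
    · exact ⟨B, h, Subset.rfl⟩
  obtain ⟨⟨K, hKc⟩, hK⟩ := isCompact_Icc.elim_directed_family_closed _
    (fun K : c => (hc K.2).1) hempty hdir
  have hK' := hc hKc
  have hsK := hs K hKc
  have htK := ht K hKc
  obtain ⟨m, hm⟩ := hK'.exists_greatest (t := s + η) (by linarith [(hK'.2.1 hsK).1])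
  obtain ⟨n, hn⟩ := hK'.exists_least (t := s + η) (by linarith [(hK'.2.1 htK).2])
  have hfmn := hK'.eq_of_disjoint hm hn
  have hsm : s ≤ m := hm.2 ⟨hsK, by simp [hη.le]⟩
  have hnt : n ≤ t := hn.2 ⟨htK, by simp only [mem_Ici]; linarith⟩
  have hms : m ≤ s + η := hm.1.2
  have hns : s + η ≤ n := hn.1.2
  have htn : t - η < n := by
    by_contra! h
    exact (disjoint_iff_inter_eq_empty.2 hK).le_bot ⟨⟨hns, h⟩, hn.1.1⟩
  have d1 : dist (f m) (f s) < ε / 2 := h1 m (by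
    rw [Real.dist_eq, abs_lt]; constructor <;> linarith)
  have d2 : dist (f n) (f t) < ε / 2 := h2 n (by
    rw [Real.dist_eq, abs_lt]; constructor <;> linarith)
  calc dist (f s) (f t) ≤ dist (f s) (f m) + dist (f m) (f t) := dist_triangle _ _ _
    _ ≤ ε := by rw [dist_comm (f s)]; rw [hfmn] at d1 ⊢; linarith

theorem disjoint_of_minimal_isGapClosed {f : ℝ → X} {K : Set ℝ} (hK : Minimal (IsGapClosed f) K)
    {s t : ℝ} (hs : s ∈ K) (ht : t ∈ K) (hst : f s = f t) : Disjoint (Ioo s t) K := by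
  obtain ⟨⟨hcl, hsub, h0, h1, hgap⟩, hmin⟩ := hK
  have hK' : IsGapClosed f (K \ Ioo s t) := by
    refine ⟨hcl.sdiff isOpen_Ioo, sdiff_subset.trans hsub, ⟨h0, fun h => ?_⟩, ⟨h1, fun h => ?_⟩, ?_⟩
    · exact not_lt.2 (hsub hs).1 h.1
    · exact not_lt.2 (hsub ht).2 h.2
    · intro s' hs' t' ht' hst' hd
      by_cases hd' : Disjoint (Ioo s' t') K
      · exact hgap s' hs'.1 t' ht'.1 hst' hd'
      obtain ⟨k, hk', hkK⟩ := not_disjoint_iff.1 hd'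
      have hk : k ∈ Ioo s t := by
        by_contra h
        exact disjoint_left.1 hd hk' ⟨hkK, h⟩
      have hsK : s ∈ K \ Ioo s t := ⟨hs, fun h => lt_irrefl _ h.1⟩
      have htK : t ∈ K \ Ioo s t := ⟨ht, fun h => lt_irrefl _ h.2⟩
      have e1 : s' = s := by
        apply le_antisymm
        · by_contra! h
          exact hs'.2 ⟨h, hk'.1.trans hk.2⟩
        · by_contra! h
          exact disjoint_left.1 hd ⟨h, hk.1.trans hk'.2⟩ hsK
      have e2 : t' = t := by
        apply le_antisymm
        · by_contra! h
          exact disjoint_left.1 hd ⟨hk'.1.trans hk.2, h⟩ htK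
        · by_contra! h
          exact ht'.2 ⟨hk.1.trans hk'.2, h⟩
      rw [e1, e2, hst]
  have := hmin hK' sdiff_subset
  exact disjoint_left.2 fun u hu huK => (this huK).2 hu

/-- A path contains an arc with the same ends. -/
theorem JoinedIn.exists_isArc [MetricSpace X] {F : Set X} {x y : X} (h : JoinedIn F x y) :
    ∃ S ⊆ F, IsArc S x y := by
  obtain ⟨γ, hγ⟩ := h
  set f : ℝ → X := fun t => γ.extend t with hf
  have hfc : Continuous f := γ.extend.continuous
  have hfF : ∀ t, f t ∈ F := fun t => hγ _
  obtain ⟨K, hK⟩ := exists_minimal_isGapClosed hfc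
  have hKg := hK.1
  set pr : ℝ → ℝ := fun t => max 0 (min 1 t) with hpr
  have pr0 : ∀ t, 0 ≤ pr t := fun t => le_max_left _ _
  have pr1 : ∀ t, pr t ≤ 1 := fun t => max_le zero_le_one (min_le_left _ _)
  have prm : Monotone pr := fun s t hst => max_le_max_left _ (min_le_min_left _ hst)
  choose m hm using fun t => hKg.exists_greatest (pr0 t)
  choose n hn using fun t => hKg.exists_least (pr1 t)
  have hmn : ∀ t, f (m t) = f (n t) := fun t => hKg.eq_of_disjoint (hm t) (hn t)
  set g : ℝ → X := fun t => f (m t) with hg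
  have hmm : ∀ s t, s ≤ t → m s ≤ m t := fun s t hst =>
    (hm t).2 ⟨(hm s).1.1, le_trans (hm s).1.2 (prm hst)⟩
  have hfib : ∀ s u t, s ≤ u → u ≤ t → g s = g t → g u = g s := by
    intro s u t hsu hut h
    have hd := disjoint_of_minimal_isGapClosed hK (hm s).1.1 (hm t).1.1 h
    rcases (hmm s u hsu).eq_or_lt with h1 | h1
    · simp only [hg]; rw [h1]
    rcases (hmm u t hut).eq_or_lt with h2 | h2
    · rw [h]; simp only [hg]; rw [h2]
    exact absurd (hm u).1.1 (disjoint_left.1 hd ⟨h1, h2⟩)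
  have hprd : ∀ s t, s ≤ t → pr t - pr s ≤ t - s := by
    intro s t hst
    simp only [hpr]
    rcases max_cases 0 (min 1 t) with h1 | h1 <;> rcases max_cases 0 (min 1 s) with h2 | h2 <;>
      rcases min_cases 1 t with h3 | h3 <;> rcases min_cases 1 s with h4 | h4 <;> linarith
  have hgc : Continuous g := by
    have huc : UniformContinuousOn f (Icc 0 1) :=
      isCompact_Icc.uniformContinuousOn_of_continuous hfc.continuousOn
    apply UniformContinuous.continuous
    rw [Metric.uniformContinuous_iff]
    intro ε hε
    obtain ⟨δ, hδ, hd⟩ := Metric.uniformContinuousOn_iff.1 huc ε hε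
    have aux : ∀ s t, s ≤ t → t - s < δ → dist (g s) (g t) < ε := by
      intro s t hst hlt
      rcases (hmm s t hst).eq_or_lt with h | h
      · simp only [hg]; rw [h, dist_self]; exact hε
      have hst' : pr s ≤ m t := by
        by_contra! h1
        exact not_lt.2 ((hm s).2 ⟨(hm t).1.1, h1.le⟩) h
      have h1 : n s ≤ m t := (hn s).2 ⟨(hm t).1.1, hst'⟩
      simp only [hg]
      rw [hmn s]
      refine hd _ (hKg.2.1 (hn s).1.1) _ (hKg.2.1 (hm t).1.1) ?_
      have a1 : pr s ≤ n s := (hn s).1.2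
      have a2 : m t ≤ pr t := (hm t).1.2
      rw [Real.dist_eq, abs_lt]
      constructor <;> linarith [hprd s t hst]
    refine ⟨δ, hδ, fun {s t} hst => ?_⟩
    rw [Real.dist_eq, abs_lt] at hst
    rcases le_total s t with h | h
    · exact aux s t h (by linarith)
    · rw [dist_comm]; exact aux t s h (by linarith)
  have hb : Bornology.IsBounded (range g) := by
    refine (isCompact_Icc.image hfc).isBounded.subset (t := f '' Icc 0 1) ?_
    rintro _ ⟨t, rfl⟩
    exact ⟨m t, hKg.2.1 (hm t).1.1, rfl⟩
  have m0 : m 0 = 0 := by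
    have h1 : m 0 ≤ pr 0 := (hm 0).1.2
    have : pr 0 = 0 := by simp [hpr]
    exact le_antisymm (h1.trans this.le) (hKg.2.1 (hm 0).1.1).1
  have m1 : m 1 = 1 := by
    have : pr 1 = 1 := by simp [hpr]
    exact le_antisymm (hKg.2.1 (hm 1).1.1).2 ((hm 1).2 ⟨hKg.2.2.2.1, this.ge⟩)
  have harc := isArc_image_of_fibers_ordConnected hgc hb hfib (zero_le_one (α := ℝ))
  have g0 : g 0 = x := by simp [hg, m0, hf]
  have g1 : g 1 = y := by simp [hg, m1, hf]
  rw [g0, g1] at harc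
  refine ⟨_, ?_, harc⟩
  rintro _ ⟨t, -, rfl⟩
  exact hfF _

end PathToArc

section Jordan

variable {X : Type} [MetricSpace X]

theorem isJordanCurve_image {f : ℝ → X} {a b : ℝ} (hab : a < b) (hf : ContinuousOn f (Icc a b))
    (hi : InjOn f (Ico a b)) (h : f a = f b) : IsJordanCurve (f '' Icc a b) := by
  have hba : 0 < b - a := sub_pos.2 hab
  set g : ℝ → X := fun t => f (a + t * (b - a)) with hg
  have hm : MapsTo (fun t : ℝ => a + t * (b - a)) (Icc 0 1) (Icc a b) := fun t ht => by
    constructor <;> nlinarith [ht.1, ht.2]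
  have hm' : MapsTo (fun t : ℝ => a + t * (b - a)) (Ico 0 1) (Ico a b) := fun t ht => by
    constructor <;> nlinarith [ht.1, ht.2]
  have hgc : ContinuousOn g (Icc 0 1) := hf.comp (by fun_prop) hm
  have hgi : InjOn g (Ico 0 1) := by
    intro s hs t ht hst
    have := hi (hm' hs) (hm' ht) hst
    simp only [add_right_inj] at this
    exact mul_right_cancel₀ hba.ne' this
  have hg01 : g 0 = g 1 := by simp [hg, h]
  set F : AddCircle (1 : ℝ) → X := AddCircle.liftIco 1 0 g with hF
  have hFc : Continuous F := AddCircle.liftIco_zero_continuous hg01 hgc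
  have hFv : ∀ t ∈ Ico (0 : ℝ) 1, F t = g t := fun t ht => AddCircle.liftIco_zero_coe_apply ht
  have hFi : Function.Injective F := by
    intro u v huv
    obtain ⟨s, hs, rfl⟩ := AddCircle.eq_coe_Ico u
    obtain ⟨t, ht, rfl⟩ := AddCircle.eq_coe_Ico v
    rw [hFv s hs, hFv t ht] at huv
    rw [hgi hs ht huv]
  have hr : range F = f '' Icc a b := by
    ext p
    constructor
    · rintro ⟨u, rfl⟩
      obtain ⟨s, hs, rfl⟩ := AddCircle.eq_coe_Ico u
      rw [hFv s hs]
      exact ⟨_, hm ⟨hs.1, hs.2.le⟩, rfl⟩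
    · rintro ⟨t, ht, rfl⟩
      rcases ht.2.eq_or_lt with rfl | htb
      · exact ⟨(0 : ℝ), by rw [hFv 0 (by simp)]; simp [hg, h]⟩
      · have h0 : (t - a) / (b - a) ∈ Ico (0 : ℝ) 1 :=
          ⟨div_nonneg (by linarith [ht.1]) hba.le, by rw [div_lt_one hba]; linarith⟩
        refine ⟨((t - a) / (b - a) : ℝ), ?_⟩
        rw [hFv _ h0]
        simp only [hg]
        rw [div_mul_cancel₀ _ hba.ne']
        congr 1; ring
  rw [← hr]
  exact ⟨((hFc.isClosedEmbedding hFi).isEmbedding).toHomeomorph⟩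

variable {J J₁ J₂ A B G T : Set X} {a b c d x y z : X}

/-- Two arcs with the same ends and otherwise disjoint form a Jordan curve. -/
theorem IsArc.isJordanCurve (hA : IsArc A x y) (hB : IsArc B x y) (hxy : x ≠ y)
    (hAB : A ∩ B ⊆ {x, y}) : IsJordanCurve (A ∪ B) := by
  replace hB := hB.symm
  obtain ⟨a, b, γ, hab, hc, hi, hax, hb, rfl⟩ := hA
  obtain ⟨c, d, δ, hcd, hc', hi', hcy, hdx, rfl⟩ := hB
  have hab' : a < b := hab.lt_of_ne fun h => hxy (by rw [← hax, ← hb, h])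
  have hcd' : c < d := hcd.lt_of_ne fun h => hxy (by rw [← hdx, ← hcy, h])
  set e : ℝ → X := fun t => if t ≤ b then γ t else δ (t - b + c) with he
  have e1 : ∀ t ∈ Icc a b, e t = γ t := fun t ht => if_pos ht.2
  have e2 : ∀ t ∈ Icc b (b + d - c), e t = δ (t - b + c) := by
    intro t ht
    rcases ht.1.eq_or_lt with rfl | h
    · simp [he, hb, hcy]
    · exact if_neg (not_le.2 h)
  have hm : MapsTo (fun t : ℝ => t - b + c) (Icc b (b + d - c)) (Icc c d) := fun t ht => by
    constructor <;> linarith [ht.1, ht.2]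
  have hU : Icc a (b + d - c) = Icc a b ∪ Icc b (b + d - c) :=
    (Icc_union_Icc_eq_Icc hab (by linarith)).symm
  have i1 : e '' Icc a b = γ '' Icc a b := image_congr e1
  have i2 : e '' Icc b (b + d - c) = δ '' Icc c d := by
    rw [image_congr e2]
    ext p
    constructor
    · rintro ⟨t, ht, rfl⟩
      exact ⟨_, hm ht, rfl⟩
    · rintro ⟨t, ht, rfl⟩
      exact ⟨t - c + b, ⟨by linarith [ht.1], by linarith [ht.2]⟩, by simp⟩
  have hlast : e (b + d - c) = x := by
    rw [e2 _ (right_mem_Icc.2 (by linarith)), ← hdx]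
    congr 1; ring
  have hJ : e '' Icc a (b + d - c) = γ '' Icc a b ∪ δ '' Icc c d := by
    rw [hU, image_union, i1, i2]
  rw [← hJ]
  refine isJordanCurve_image (by linarith) ?_ ?_ ?_
  · rw [hU]
    refine ContinuousOn.union_of_isClosed ?_ ?_ isClosed_Icc isClosed_Icc
    · exact hc.congr e1
    · exact (hc'.comp (by fun_prop) hm).congr e2
  · have hd : d ∈ Icc c d := right_mem_Icc.2 hcd
    have hc0 : c ∈ Icc c d := left_mem_Icc.2 hcd
    have key : ∀ s ∈ Icc a b, ∀ t ∈ Ico b (b + d - c), e s = e t → s = t := by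
      intro s hs t ht hst
      have ht' : t ∈ Icc b (b + d - c) := ⟨ht.1, ht.2.le⟩
      have h1 : γ s ∈ ({x, y} : Set X) := hAB ⟨⟨s, hs, rfl⟩, by
        rw [← e1 s hs, hst, ← i2]; exact ⟨t, ht', rfl⟩⟩
      rw [e1 s hs, e2 t ht'] at hst
      rcases h1 with h1 | h1
      · rw [h1, ← hdx] at hst
        have := hi' hd (hm ht') hst
        simp only at this
        linarith [ht.2]
      · have h2 : s = b := hi hs (right_mem_Icc.2 hab) (h1.trans hb.symm)
        rw [h1, ← hcy] at hst
        have := hi' hc0 (hm ht') hst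
        simp only at this
        linarith
    have hcov : ∀ t ∈ Ico a (b + d - c), t ∈ Icc a b ∨ t ∈ Ico b (b + d - c) := by
      intro t ht
      rcases le_total t b with h | h
      · exact Or.inl ⟨ht.1, h⟩
      · exact Or.inr ⟨h, ht.2⟩
    intro s hs t ht hst
    rcases hcov s hs with hs | hs <;> rcases hcov t ht with ht | ht
    · rw [e1 s hs, e1 t ht] at hst
      exact hi hs ht hst
    · exact key s hs t ht hst
    · exact (key t ht s hs hst.symm).symm
    · replace hs : s ∈ Icc b (b + d - c) := ⟨hs.1, hs.2.le⟩
      replace ht : t ∈ Icc b (b + d - c) := ⟨ht.1, ht.2.le⟩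
      rw [e2 s hs, e2 t ht] at hst
      have := hi' (hm hs) (hm ht) hst
      simp only at this
      linarith
  · rw [hlast, e1 a (left_mem_Icc.2 hab), hax]

/-- Two distinct points cut a Jordan curve into two arcs. -/
theorem IsJordanCurve.split (hJ : IsJordanCurve J) (ha : a ∈ J) (hb : b ∈ J) (hab : a ≠ b) :
    ∃ A B, IsArc A a b ∧ IsArc B a b ∧ A ∪ B = J ∧ A ∩ B = {a, b} := by
  obtain ⟨φ⟩ := hJ
  obtain ⟨α, hα⟩ := φ.surjective ⟨a, ha⟩
  obtain ⟨β, hβ⟩ := φ.surjective ⟨b, hb⟩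
  obtain ⟨s, hs, hsβ⟩ := AddCircle.eq_coe_Ico (β - α)
  set f : ℝ → X := fun t => φ (α + t) with hf
  have hfc : Continuous f := by
    have : Continuous fun t : ℝ => (t : AddCircle (1 : ℝ)) := AddCircle.continuous_mk' 1
    exact continuous_subtype_val.comp (φ.continuous.comp (continuous_const.add this))
  have hinj : ∀ s t : ℝ, f s = f t → (s : AddCircle (1 : ℝ)) = t := fun s t h =>
    add_left_cancel (φ.injective (Subtype.ext h))
  have hf0 : f 0 = a := by simp [hf, hα]
  have hf1 : f 1 = a := by
    have : ((1 : ℝ) : AddCircle (1 : ℝ)) = 0 := AddCircle.coe_period 1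
    simp [hf, hα, this]
  have hfs : f s = b := by
    simp [hf, hsβ, hβ]
  have hs0 : 0 < s := hs.1.lt_of_ne fun h => hab (by rw [← hf0, ← hfs, h])
  have hI : InjOn f (Ico 0 1) := fun u hu v hv huv =>
    (AddCircle.coe_eq_coe_iff_of_mem_Ico (a := 0) (by simpa using hu) (by simpa using hv)).1
      (hinj u v huv)
  have hI' : InjOn f (Ioc 0 1) := fun u hu v hv huv =>
    (AddCircle.coe_eq_coe_iff_of_mem_Ioc (a := 0) (by simpa using hu) (by simpa using hv)).1
      (hinj u v huv)
  have j1 : IsArc (f '' Icc 0 s) a b := ⟨0, s, f, hs.1, hfc.continuousOn,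
    hI.mono (Icc_subset_Ico_right hs.2), hf0, hfs, rfl⟩
  have j2 : IsArc (f '' Icc s 1) b a := ⟨s, 1, f, hs.2.le, hfc.continuousOn,
    hI'.mono (Icc_subset_Ioc_left hs0), hfs, hf1, rfl⟩
  refine ⟨_, _, j1, j2.symm, ?_, ?_⟩
  · rw [← image_union, Icc_union_Icc_eq_Icc hs.1 hs.2.le]
    ext p
    constructor
    · rintro ⟨t, -, rfl⟩
      exact (φ _).2
    · intro hp
      obtain ⟨π, hπ⟩ := φ.surjective ⟨p, hp⟩
      obtain ⟨t, ht, htπ⟩ := AddCircle.eq_coe_Ico (π - α)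
      exact ⟨t, ⟨ht.1, ht.2.le⟩, by simp [hf, htπ, hπ]⟩
  · apply Subset.antisymm
    · rintro _ ⟨⟨u, hu, rfl⟩, ⟨v, hv, huv⟩⟩
      rcases hv.2.eq_or_lt with rfl | hv1
      · left; rw [← huv, hf1]
      · have : v = u := hI ⟨hs.1.trans hv.1, hv1⟩ ⟨hu.1, hu.2.trans_lt hs.2⟩ huv
        subst this
        right
        rw [mem_singleton_iff, ← hfs, le_antisymm hu.2 hv.1]
    · rintro _ (rfl | rfl)
      · exact ⟨j1.left_mem, j2.right_mem⟩
      · exact ⟨j1.right_mem, j2.left_mem⟩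

theorem IsJordanCurve.isClosed (hJ : IsJordanCurve J) : IsClosed J := by
  obtain ⟨φ⟩ := hJ
  have : CompactSpace J := φ.compactSpace
  exact (isCompact_iff_compactSpace.2 this).isClosed

/-- A Jordan curve in a theta-curve containing the chord and a given point. -/
theorem IsJordanCurve.exists_theta (hJ : IsJordanCurve J) (hG : IsArc G a b) (hab : a ≠ b)
    (ha : a ∈ J) (hb : b ∈ J) (hGJ : G ∩ J ⊆ {a, b}) (hx : x ∈ J) :
    ∃ J', IsJordanCurve J' ∧ J' ⊆ J ∪ G ∧ x ∈ J' ∧ G ⊆ J' := by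
  obtain ⟨A, B, hA, hB, rfl, -⟩ := hJ.split ha hb hab
  rcases hx with hx | hx
  · refine ⟨A ∪ G, hA.isJordanCurve hG hab fun p hp => hGJ ⟨hp.2, Or.inl hp.1⟩, ?_, Or.inl hx,
      subset_union_right⟩
    exact union_subset_union_left _ subset_union_left
  · refine ⟨B ∪ G, hB.isJordanCurve hG hab fun p hp => hGJ ⟨hp.2, Or.inr hp.1⟩, ?_, Or.inl hx,
      subset_union_right⟩
    exact union_subset_union_left _ subset_union_right

/-- If two Jordan curves share two points, any point of the first and any point of the second lie
on a common Jordan curve in the union. -/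
theorem IsJordanCurve.exists_of_two_common (hJ₁ : IsJordanCurve J₁) (hJ₂ : IsJordanCurve J₂)
    (hab : a ≠ b) (ha₁ : a ∈ J₁) (hb₁ : b ∈ J₁) (ha₂ : a ∈ J₂) (hb₂ : b ∈ J₂) (hx : x ∈ J₁)
    (hy : y ∈ J₂) : ∃ J, IsJordanCurve J ∧ J ⊆ J₁ ∪ J₂ ∧ x ∈ J ∧ y ∈ J := by
  by_cases hy₁ : y ∈ J₁
  · exact ⟨J₁, hJ₁, subset_union_left, hx, hy₁⟩
  obtain ⟨A, B, hA, hB, hABJ, -⟩ := hJ₂.split ha₂ hb₂ hab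
  have key : ∀ A, IsArc A a b → A ⊆ J₂ → y ∈ A →
      ∃ J, IsJordanCurve J ∧ J ⊆ J₁ ∪ J₂ ∧ x ∈ J ∧ y ∈ J := by
    intro A hA hAJ hyA
    obtain ⟨G, hGA, c, hc, d, hd, hcd, hG, hyG, hGJ⟩ :=
      hA.exists_excursion hJ₁.isClosed ha₁ hb₁ hyA hy₁
    obtain ⟨J, hJ, hJs, hxJ, hGJ'⟩ := hJ₁.exists_theta hG hcd hc hd hGJ.subset hx
    exact ⟨J, hJ, hJs.trans (union_subset_union_right _ (hGA.trans hAJ)), hxJ, hGJ' hyG⟩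
  rw [← hABJ] at hy
  rcases hy with hy | hy
  · exact key A hA (hABJ ▸ subset_union_left) hy
  · exact key B hB (hABJ ▸ subset_union_right) hy

end Jordan

section Gluing

variable {X : Type} [MetricSpace X] {J T E : Set X} {a b u v p : X}

/-- Adding to a cyclicly connected set a Jordan curve meeting it in two points. -/
theorem CyclicallyConnected.union_isJordanCurve (hT : CyclicallyConnected T)
    (hJ : IsJordanCurve J) (hab : a ≠ b) (haT : a ∈ T) (hbT : b ∈ T) (haJ : a ∈ J) (hbJ : b ∈ J) :
    CyclicallyConnected (T ∪ J) := by
  have key : ∀ x ∈ J, ∀ y ∈ T, ∃ J' ⊆ T ∪ J, IsJordanCurve J' ∧ x ∈ J' ∧ y ∈ J' := by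
    intro x hx y hy
    by_cases hyJ : y ∈ J
    · exact ⟨J, subset_union_right, hJ, hx, hyJ⟩
    have single : ∀ a ∈ T, a ∈ J → (∃ J' ⊆ T ∪ J, IsJordanCurve J' ∧ x ∈ J' ∧ y ∈ J') ∨
        ∃ J₁ ⊆ T, IsJordanCurve J₁ ∧ y ∈ J₁ ∧ a ∈ J₁ ∧ J₁ ∩ J ⊆ {a} := by
      intro a haT haJ
      obtain ⟨J₁, hJ₁T, hJ₁, hy₁, ha₁⟩ := hT y hy a haT
      by_cases h : J₁ ∩ J ⊆ {a}
      · exact Or.inr ⟨J₁, hJ₁T, hJ₁, hy₁, ha₁, h⟩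
      · obtain ⟨e, ⟨he₁, heJ⟩, hea⟩ := not_subset.1 h
        obtain ⟨J', hJ', hs, hxJ', hyJ'⟩ := hJ.exists_of_two_common hJ₁ (Ne.symm hea)
          haJ heJ ha₁ he₁ hx hy₁
        exact Or.inl ⟨J', hs.trans (union_subset subset_union_right
          (hJ₁T.trans subset_union_left)), hJ', hxJ', hyJ'⟩
    rcases single a haT haJ with h | ⟨J₁, hJ₁T, hJ₁, hy₁, ha₁, hJ₁J⟩
    · exact h
    rcases single b hbT hbJ with h | ⟨J₂, hJ₂T, hJ₂, hy₂, hb₂, hJ₂J⟩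
    · exact h
    have hya : y ≠ a := fun h => hyJ (h ▸ haJ)
    have hyb : b ≠ y := fun h => hyJ (h ▸ hbJ)
    have hb₁ : b ∉ J₁ := fun h => hab (hJ₁J ⟨h, hbJ⟩ : b = a).symm
    have hE : ∃ c E, c ≠ a ∧ IsArc E b c ∧ c ∈ J₁ ∧ E ⊆ J₂ ∧ E ∩ J₁ = {c} := by
      obtain ⟨A, B, hA, hB, hABJ, hAB⟩ := hJ₂.split hb₂ hy₂ hyb
      obtain ⟨c, hc, A₁, A₂, hA₁, -, hAA, -, hcA⟩ := hA.exists_firstHit hJ₁.isClosed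
        ⟨y, hA.right_mem, hy₁⟩
      obtain ⟨d, hd, B₁, B₂, hB₁, -, hBB, -, hdB⟩ := hB.exists_firstHit hJ₁.isClosed
        ⟨y, hB.right_mem, hy₁⟩
      have hA₁A : A₁ ⊆ A := hAA ▸ subset_union_left
      have hB₁B : B₁ ⊆ B := hBB ▸ subset_union_left
      by_cases hca : c = a
      · refine ⟨d, B₁, ?_, hB₁, hd, ?_, hdB⟩
        · rintro rfl
          have : d ∈ A ∩ B := ⟨hA₁A (hca ▸ hA₁.right_mem), hB₁B hB₁.right_mem⟩
          rw [hAB] at this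
          rcases this with h | h
          · exact hab h
          · exact hya h.symm
        · exact hB₁B.trans (hABJ ▸ subset_union_right)
      · exact ⟨c, A₁, hca, hA₁, hc, hA₁A.trans (hABJ ▸ subset_union_left), hcA⟩
    obtain ⟨c, E, hca, hE, hc₁, hE₂, hE₁⟩ := hE
    have hF : ∃ F ⊆ J₁, IsArc F c a ∧ y ∈ F := by
      obtain ⟨A, B, hA, hB, hABJ, -⟩ := hJ₁.split hc₁ ha₁ hca
      rcases hABJ.symm ▸ hy₁ with h | h
      · exact ⟨A, hABJ ▸ subset_union_left, hA, h⟩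
      · exact ⟨B, hABJ ▸ subset_union_right, hB, h⟩
    obtain ⟨F, hFJ, hF, hyF⟩ := hF
    have hEF : IsArc (E ∪ F) b a := hE.trans hF (by
      rw [← hE₁]; exact inter_subset_inter_right _ hFJ)
    obtain ⟨J', hJ', hs, hxJ', hGJ'⟩ := hJ.exists_theta hEF hab.symm hbJ haJ (by
      rintro q ⟨hq | hq, hqJ⟩
      · exact Or.inl (hJ₂J ⟨hE₂ hq, hqJ⟩)
      · exact Or.inr (hJ₁J ⟨hFJ hq, hqJ⟩)) hx
    refine ⟨J', hs.trans (union_subset subset_union_right (union_subset ?_ ?_)), hJ', hxJ',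
      hGJ' (Or.inr hyF)⟩
    · exact (hE₂.trans hJ₂T).trans subset_union_left
    · exact (hFJ.trans hJ₁T).trans subset_union_left
  rintro x (hx | hx) y (hy | hy)
  · obtain ⟨J', hJ'T, hJ', h1, h2⟩ := hT x hx y hy
    exact ⟨J', hJ'T.trans subset_union_left, hJ', h1, h2⟩
  · obtain ⟨J', h, hJ', h1, h2⟩ := key y hy x hx
    exact ⟨J', h, hJ', h2, h1⟩
  · exact key x hx y hy
  · exact ⟨J, subset_union_right, hJ, hx, hy⟩

/-- If an arc with ends in a cyclicly connected set passes through a point off the set, the set can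
be enlarged to contain that point. -/
theorem CyclicallyConnected.exists_of_isArc (hT : CyclicallyConnected T) (hE : IsArc E u v)
    (hu : u ∈ T) (hv : v ∈ T) (hpE : p ∈ E) (hpT : p ∉ T) :
    ∃ C, CyclicallyConnected C ∧ T ⊆ C ∧ p ∈ C := by
  have huv : u ≠ v := by
    rintro rfl
    rw [hE.eq_singleton] at hpE
    exact hpT (hpE ▸ hu)
  obtain ⟨J, hJT, hJ, huJ, hvJ⟩ := hT u hu v hv
  obtain ⟨Q, Q', hQ, -, hQJ, -⟩ := hJ.split huJ hvJ huv
  have hQT : Q ⊆ T := (hQJ ▸ subset_union_left : Q ⊆ J).trans hJT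
  obtain ⟨G, -, c, hc, d, hd, hcd, hG, hpG, hGQ⟩ :=
    hE.exists_excursion hQ.isClosed hQ.left_mem hQ.right_mem hpE fun h => hpT (hQT h)
  obtain ⟨R, hRQ, hR⟩ := hQ.exists_subarc hc hd
  have hJ' : IsJordanCurve (G ∪ R) := hG.isJordanCurve hR hcd (by
    rw [← hGQ]; exact inter_subset_inter_right _ hRQ)
  exact ⟨T ∪ (G ∪ R), hT.union_isJordanCurve hJ' hcd (hQT hc) (hQT hd) (Or.inl hG.left_mem)
    (Or.inl hG.right_mem), subset_union_left, Or.inr (Or.inl hpG)⟩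

end Gluing

/-- Dependent choice along the natural numbers, with an invariant. -/
theorem exists_seq_of_step {α : Type*} (P : ℕ → α → Prop) (R : ℕ → α → α → Prop) {a₀ : α}
    (h₀ : P 0 a₀) (h : ∀ n a, P n a → ∃ b, P (n + 1) b ∧ R n a b) :
    ∃ s : ℕ → α, s 0 = a₀ ∧ (∀ n, P n (s n)) ∧ ∀ n, R n (s n) (s (n + 1)) := by
  choose! f hf hR using h
  let s : ℕ → α := fun n => Nat.rec a₀ f n
  have hs : ∀ n, P n (s n) := fun n => by
    induction n with
    | zero => exact h₀
    | succ n ih => exact hf n _ ih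
  exact ⟨s, rfl, hs, fun n => hR n _ (hs n)⟩

section Peano

variable {X : Type} [MetricSpace X]

theorem IsPreconnected.exists_chain {V : Set X} (hV : IsPreconnected V) {δ : ℝ} (hδ : 0 < δ)
    {p q : X} (hp : p ∈ V) (hq : q ∈ V) :
    ∃ (c : ℕ → X) (m : ℕ), c 0 = p ∧ (∀ i, m ≤ i → c i = q) ∧
      (∀ i, dist (c i) (c (i + 1)) < δ) ∧ ∀ i, c i ∈ V := by
  have hrel : Relation.ReflTransGen (fun a b => a ∈ V ∧ b ∈ V ∧ dist a b < δ) p q := by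
    refine hV.induction₂' _ ?_ ?_ hp hq
    · intro x hx
      filter_upwards [inter_mem_nhdsWithin V (ball_mem_nhds x hδ)] with y hy
      exact ⟨.single ⟨hx, hy.1, by rw [dist_comm]; exact hy.2⟩, .single ⟨hy.1, hx, hy.2⟩⟩
    · intro x y z _ _ _ h1 h2
      exact h1.trans h2
  clear hp
  induction hrel using Relation.ReflTransGen.head_induction_on with
  | refl => exact ⟨fun _ => q, 0, rfl, fun _ _ => rfl, fun _ => by simpa using hδ, fun _ => hq⟩
  | @head a _ h _ ih =>
    obtain ⟨c, m, h0, hm, hd, hc⟩ := ih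
    refine ⟨fun i => Nat.casesOn i a c, m + 1, rfl, ?_, ?_, ?_⟩
    · rintro (_ | i) hi
      · omega
      · exact hm i (by omega)
    · rintro (_ | i)
      · simpa [h0] using h.2.2
      · exact hd i
    · rintro (_ | i)
      · exact h.1
      · exact hc i

theorem exists_uniform_isPreconnected [CompactSpace X] [LocallyConnectedSpace X] {ε : ℝ}
    (hε : 0 < ε) : ∃ δ > 0, δ ≤ ε ∧ ∀ x y : X, dist x y < δ →
      ∃ V : Set X, IsPreconnected V ∧ x ∈ V ∧ y ∈ V ∧ ∀ z ∈ V, dist z x < ε := by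
  have h := fun x : X => locallyConnectedSpace_iff_subsets_isOpen_isConnected.1 ‹_› x
    (ball x (ε / 2)) (ball_mem_nhds x (by linarith))
  choose V hVb hVo hxV hV using h
  obtain ⟨δ, hδ, hL⟩ := lebesgue_number_lemma_of_metric isCompact_univ hVo
    (fun x _ => mem_iUnion.2 ⟨x, hxV x⟩)
  refine ⟨min δ ε, lt_min hδ hε, min_le_right _ _, fun x y hxy => ?_⟩
  obtain ⟨i, hi⟩ := hL x (mem_univ x)
  have hx : x ∈ V i := hi (mem_ball_self hδ)
  refine ⟨V i, (hV i).isPreconnected, hx, hi ?_, fun z hz => ?_⟩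
  · rw [mem_ball, dist_comm]; exact hxy.trans_le (min_le_left _ _)
  · have h1 := mem_ball.1 (hVb i hz)
    have h2 := mem_ball'.1 (hVb i hx)
    linarith [dist_triangle z i x]

/-- Refining a chain to a chain of smaller mesh. -/
theorem exists_chain_refinement {δ δ' ε : ℝ} (hδ' : 0 < δ') (hε : 0 < ε)
    (hulc : ∀ x y : X, dist x y < δ →
      ∃ V : Set X, IsPreconnected V ∧ x ∈ V ∧ y ∈ V ∧ ∀ z ∈ V, dist z x < ε)
    {a : ℕ → X} {N : ℕ} {y : X} (hy : ∀ k, N ≤ k → a k = y)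
    (hd : ∀ k, dist (a k) (a (k + 1)) < δ) :
    ∃ (a' : ℕ → X) (M : ℕ), 0 < M ∧ a' 0 = a 0 ∧ (∀ k, N * M ≤ k → a' k = y) ∧
      (∀ k, dist (a' k) (a' (k + 1)) < δ') ∧ ∀ k, dist (a' k) (a (k / M)) < ε := by
  have h : ∀ k, ∃ (c : ℕ → X) (m : ℕ), (N ≤ k → m = 0) ∧ c 0 = a k ∧
      (∀ i, m ≤ i → c i = a (k + 1)) ∧ (∀ i, dist (c i) (c (i + 1)) < δ') ∧
      ∀ i, dist (c i) (a k) < ε := by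
    intro k
    by_cases hk : N ≤ k
    · refine ⟨fun _ => y, 0, fun _ => rfl, (hy k hk).symm, fun _ _ => (hy _ (by omega)).symm,
        fun _ => by simpa using hδ', fun _ => by rw [hy k hk]; simpa using hε⟩
    · obtain ⟨V, hV, h1, h2, h3⟩ := hulc _ _ (hd k)
      obtain ⟨c, m, c0, cm, cd, cV⟩ := hV.exists_chain hδ' h1 h2
      exact ⟨c, m, fun h => absurd h hk, c0, cm, cd, fun i => h3 _ (cV i)⟩
  choose c m hm c0 cm cd cε using h
  set M := (Finset.range N).sup m + 1 with hM
  have hmM : ∀ k, m k ≤ M := by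
    intro k
    by_cases hk : N ≤ k
    · rw [hm k hk]; omega
    · exact (Finset.le_sup (f := m) (Finset.mem_range.2 (not_le.1 hk))).trans (Nat.le_succ _)
  have hM0 : 0 < M := by omega
  refine ⟨fun j => c (j / M) (j % M), M, hM0, ?_, ?_, ?_, fun k => cε _ _⟩
  · simp [c0]
  · intro k hk
    have h1 : N ≤ k / M := (Nat.le_div_iff_mul_le hM0).2 hk
    simp only
    rw [cm _ _ (by rw [hm _ h1]; omega), hy _ (by omega)]
  · intro k
    have hlt : k % M < M := Nat.mod_lt _ hM0
    have hk := Nat.div_add_mod k M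
    rcases (Nat.succ_le_of_lt hlt).lt_or_eq with h | h
    · have e1 : (k + 1) / M = k / M := by
        rw [Nat.div_eq_iff hM0, mul_comm]; constructor <;> [omega; skip]
        have := Nat.div_add_mod k M
        omega
      have e2 : (k + 1) % M = k % M + 1 := by
        have h2 := Nat.div_add_mod (k + 1) M
        rw [e1] at h2; omega
      simp only [e1, e2]
      exact cd _ _
    · have hk' : k + 1 = M * (k / M + 1) := by rw [mul_add]; omega
      have e1 : (k + 1) / M = k / M + 1 := by rw [hk', Nat.mul_div_cancel_left _ hM0]
      have e2 : (k + 1) % M = 0 := by rw [hk', Nat.mul_mod_right]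
      simp only [e1, e2]
      rw [c0, ← cm (k / M) M (hmM _)]
      have := cd (k / M) (k % M)
      rwa [show k % M + 1 = M from h] at this

theorem exists_uniform_joinedIn [CompactSpace X] [LocallyConnectedSpace X] {ε : ℝ}
    (hε : 0 < ε) : ∃ δ > 0, ∀ x y : X, dist x y < δ → JoinedIn (ball x ε) x y := by
  set e : ℕ → ℝ := fun n => ε / 4 / 2 / 2 ^ n with he
  have he0 : ∀ n, 0 < e n := fun n => by simp only [he]; positivity
  choose δ hδ0 hδe hulc using fun n => exists_uniform_isPreconnected (X := X) (he0 n)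
  refine ⟨δ 0, hδ0 0, fun x y hxy => ?_⟩
  obtain ⟨s, hs0, hP, hR⟩ := exists_seq_of_step (α := (ℕ → X) × ℕ)
    (P := fun n s => 0 < s.2 ∧ s.1 0 = x ∧ (∀ k, s.2 ≤ k → s.1 k = y) ∧
      ∀ k, dist (s.1 k) (s.1 (k + 1)) < δ n)
    (R := fun n s s' => ∃ M, 0 < M ∧ s'.2 = s.2 * M ∧ ∀ k, dist (s'.1 k) (s.1 (k / M)) < e n)
    (a₀ := (fun i => if i = 0 then x else y, 1)) (by
      refine ⟨one_pos, by simp, fun k hk => ?_, ?_⟩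
      · simp only at hk
        simp only
        rw [if_neg (by omega)]
      · rintro (_ | k)
        · simpa using hxy
        · simpa using hδ0 0) (by
      rintro n ⟨a, N⟩ ⟨hN, h0, hy, hd⟩
      obtain ⟨a', M, hM, h1, h2, h3, h4⟩ :=
        exists_chain_refinement (hδ0 (n + 1)) (he0 n) (hulc n) hy hd
      exact ⟨(a', N * M), ⟨Nat.mul_pos hN hM, h1.trans h0, h2, h3⟩, M, hM, rfl, h4⟩)
  set f : ℕ → ℝ → X := fun n t => (s n).1 ⌊t * (s n).2⌋₊ with hf
  have hstep : ∀ t n, dist (f n t) (f (n + 1) t) ≤ ε / 4 / 2 / 2 ^ n := by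
    intro t n
    obtain ⟨M, hM, hN, hd⟩ := hR n
    have hfl : ⌊t * (s n).2⌋₊ = ⌊t * (s (n + 1)).2⌋₊ / M := by
      rw [← Nat.floor_div_natCast, hN]
      congr 1
      have : (M : ℝ) ≠ 0 := by positivity
      push_cast
      field_simp
    simp only [hf]
    rw [hfl, dist_comm]
    exact (hd _).le
  have hcau : ∀ t, CauchySeq fun n => f n t := fun t => cauchySeq_of_le_geometric_two (hstep t)
  choose g hg using fun t => cauchySeq_tendsto_of_complete (hcau t)
  have hgd : ∀ t n, dist (f n t) (g t) ≤ ε / 4 / 2 ^ n := fun t n =>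
    dist_le_of_le_geometric_two_of_tendsto (hstep t) (hg t) n
  have hf0 : ∀ n, f n 0 = x := fun n => by
    simp only [hf, zero_mul, Nat.floor_zero]; exact (hP n).2.1
  have hf1 : ∀ n, f n 1 = y := fun n => by
    simp only [hf, one_mul, Nat.floor_natCast]; exact (hP n).2.2.1 _ le_rfl
  have hg0 : g 0 = x := tendsto_nhds_unique (hg 0) (by simp only [hf0]; exact tendsto_const_nhds)
  have hg1 : g 1 = y := tendsto_nhds_unique (hg 1) (by simp only [hf1]; exact tendsto_const_nhds)
  have hgc : ContinuousOn g unitInterval := by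
    rw [Metric.continuousOn_iff]
    intro t ht η hη
    obtain ⟨n, hn⟩ : ∃ n : ℕ, 3 * (ε / 4 / 2 ^ n) < η := by
      obtain ⟨n, hn⟩ := exists_pow_lt_of_lt_one (show 0 < η / (3 * (ε / 4)) by positivity)
        (show (1 / 2 : ℝ) < 1 by norm_num)
      refine ⟨n, ?_⟩
      rw [lt_div_iff₀ (by positivity)] at hn
      rw [one_div, inv_pow] at hn
      calc 3 * (ε / 4 / 2 ^ n) = (2 ^ n)⁻¹ * (3 * (ε / 4)) := by field_simp
        _ < η := hn
    have hN : (0 : ℝ) < (s n).2 := Nat.cast_pos.2 (hP n).1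
    have hclose : ∀ u v : ℝ, 0 ≤ u → u ≤ v → v - u < 1 / (s n).2 →
        dist (f n u) (f n v) ≤ ε / 4 / 2 ^ n := by
      intro u v hu huv hlt
      have h1 : ⌊u * (s n).2⌋₊ ≤ ⌊v * (s n).2⌋₊ :=
        Nat.floor_mono (mul_le_mul_of_nonneg_right huv hN.le)
      have h2 : ⌊v * (s n).2⌋₊ ≤ ⌊u * (s n).2⌋₊ + 1 := by
        rw [← Nat.floor_add_one (mul_nonneg hu hN.le)]
        apply Nat.floor_mono
        rw [lt_div_iff₀ hN] at hlt
        linarith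
      simp only [hf]
      rcases h1.eq_or_lt with h | h
      · rw [h, dist_self]; positivity
      · rw [le_antisymm h2 h]
        refine ((hP n).2.2.2 _).le.trans ((hδe n).trans ?_)
        simp only [he]
        have : 0 < ε / 4 / 2 ^ n := by positivity
        rw [div_right_comm]
        linarith
    refine ⟨1 / (s n).2, by positivity, fun u hu hut => ?_⟩
    have hd : dist (f n u) (f n t) ≤ ε / 4 / 2 ^ n := by
      rw [Real.dist_eq, abs_lt] at hut
      rcases le_total u t with h | h
      · exact hclose u t hu.1 h (by linarith)
      · rw [dist_comm]; exact hclose t u ht.1 h (by linarith)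
    calc dist (g u) (g t) ≤ dist (g u) (f n u) + dist (f n u) (f n t) + dist (f n t) (g t) :=
          dist_triangle4 _ _ _ _
      _ < η := by rw [dist_comm (g u)]; linarith [hgd u n, hgd t n]
  refine JoinedIn.ofLine hgc hg0 hg1 ?_
  rintro _ ⟨t, -, rfl⟩
  have h0 : dist (f 0 t) x ≤ ε / 4 := by
    have hc : ∀ k, dist ((s 0).1 k) x ≤ ε / 4 := by
      intro k
      rw [hs0]
      simp only
      split_ifs
      · rw [dist_self]; positivity
      · rw [dist_comm]
        refine hxy.le.trans ((hδe 0).trans ?_)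
        simp only [he]
        linarith
    exact hc _
  have h1 := hgd t 0
  rw [pow_zero, div_one] at h1
  rw [mem_ball]
  rw [dist_comm] at h1
  linarith [dist_triangle (g t) (f 0 t) x]

/-- A compact locally connected metric space is locally path connected. -/
theorem locallyPathConnectedSpace_of_compact [CompactSpace X] [LocallyConnectedSpace X] :
    LocallyPathConnectedSpace X := by
  refine LocallyPathConnectedSpace.of_bases (p := fun _ ε => (0 : ℝ) < ε)
    (s := fun x ε => pathComponentIn (ball x ε) x) (fun x => ?_) fun x ε hε =>
      isPathConnected_pathComponentIn (mem_ball_self hε)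
  refine ⟨fun U => ⟨fun hU => ?_, ?_⟩⟩
  · obtain ⟨ε, hε, h⟩ := Metric.mem_nhds_iff.1 hU
    exact ⟨ε, hε, pathComponentIn_subset.trans h⟩
  · rintro ⟨ε, hε, h⟩
    obtain ⟨δ, hδ, hj⟩ := exists_uniform_joinedIn (X := X) hε
    refine Filter.mem_of_superset (ball_mem_nhds x hδ) fun y hy => h ?_
    exact hj x y (by rw [dist_comm]; exact hy)

end Peano

section Menger

variable {X : Type} [MetricSpace X]

/-- Two distinct points of an arc cut off disjoint end pieces. -/
theorem IsArc.exists_disjoint_ends {E : Set X} {x y c d : X} (hE : IsArc E x y) (hc : c ∈ E)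
    (hd : d ∈ E) (hcd : c ≠ d) : ∃ E₁ ⊆ E, ∃ E₂ ⊆ E, Disjoint E₁ E₂ ∧
      ((IsArc E₁ x c ∧ IsArc E₂ d y) ∨ (IsArc E₁ x d ∧ IsArc E₂ c y)) := by
  obtain ⟨A, B, hA, hB, hAB, hi⟩ := hE.split hc
  have hAE : A ⊆ E := hAB ▸ subset_union_left
  have hBE : B ⊆ E := hAB ▸ subset_union_right
  rw [← hAB] at hd
  rcases hd with hd | hd
  · obtain ⟨A₁, A₂, hA₁, hA₂, hAA, hAi⟩ := hA.split hd
    have hA₁A : A₁ ⊆ A := hAA ▸ subset_union_left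
    refine ⟨A₁, hA₁A.trans hAE, B, hBE, ?_, Or.inr ⟨hA₁, hB⟩⟩
    rw [disjoint_left]
    intro z hz hzB
    have h1 : z = c := hi.subset ⟨hA₁A hz, hzB⟩
    subst h1
    have h2 : z ∈ A₁ ∩ A₂ := ⟨hz, hA₂.right_mem⟩
    rw [hAi] at h2
    exact hcd h2
  · obtain ⟨B₁, B₂, hB₁, hB₂, hBB, hBi⟩ := hB.split hd
    have hB₂B : B₂ ⊆ B := hBB ▸ subset_union_right
    refine ⟨A, hAE, B₂, hB₂B.trans hBE, ?_, Or.inl ⟨hA, hB₂⟩⟩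
    rw [disjoint_left]
    intro z hz hzB
    have h1 : z = c := hi.subset ⟨hz, hB₂B hzB⟩
    subst h1
    have h2 : z ∈ B₁ ∩ B₂ := ⟨hB₁.left_mem, hzB⟩
    rw [hBi] at h2
    exact hcd h2

/-- Replacing a piece of an arc by an arc `G` meeting it only in the end points of `G`. -/
theorem IsArc.exists_reroute {E G : Set X} {x y c d : X} (hE : IsArc E x y) (hG : IsArc G c d)
    (hcd : c ≠ d) (hGE : G ∩ E = {c, d}) : ∃ E' ⊆ E ∪ G, IsArc E' x y ∧ G ⊆ E' := by
  have hc : c ∈ E := (hGE.ge (mem_insert _ _)).2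
  have hd : d ∈ E := (hGE.ge (mem_insert_of_mem _ rfl)).2
  have key : ∀ {c d : X} {G : Set X} {E₁ E₂ : Set X}, IsArc G c d → G ∩ E = {c, d} → E₁ ⊆ E →
      E₂ ⊆ E → Disjoint E₁ E₂ → IsArc E₁ x c → IsArc E₂ d y →
      ∃ E' ⊆ E ∪ G, IsArc E' x y ∧ G ⊆ E' := by
    intro c d G E₁ E₂ hG hGE h₁ h₂ h12 hE₁ hE₂
    have h1 : E₁ ∩ G ⊆ {c} := by
      rintro z ⟨hz, hzG⟩
      have : z ∈ G ∩ E := ⟨hzG, h₁ hz⟩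
      rw [hGE] at this
      rcases this with h | rfl
      · exact h
      · exact absurd hE₂.left_mem (disjoint_left.1 h12 hz)
    have h2 : (E₁ ∪ G) ∩ E₂ ⊆ {d} := by
      rintro z ⟨hz | hz, hz2⟩
      · exact absurd hz2 (disjoint_left.1 h12 hz)
      · have : z ∈ G ∩ E := ⟨hz, h₂ hz2⟩
        rw [hGE] at this
        rcases this with rfl | h
        · exact absurd hz2 (disjoint_left.1 h12 hE₁.right_mem)
        · exact h
    refine ⟨E₁ ∪ G ∪ E₂, ?_, (hE₁.trans hG h1).trans hE₂ h2, fun z hz => Or.inl (Or.inr hz)⟩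
    exact union_subset (union_subset (h₁.trans subset_union_left) subset_union_right)
      (h₂.trans subset_union_left)
  obtain ⟨E₁, h₁, E₂, h₂, h12, ⟨ha, hb⟩ | ⟨ha, hb⟩⟩ := hE.exists_disjoint_ends hc hd hcd
  · exact key hG hGE h₁ h₂ h12 ha hb
  · exact key hG.symm (by rw [hGE, pair_comm]) h₁ h₂ h12 ha hb

/-- Attaching disjoint arcs `P`, `Q` to the disjoint end pieces of an arc. -/
theorem IsArc.exists_disjoint_extensions {E P Q N : Set X} {x y c d n m : X} (hE : IsArc E x y)
    (hP : IsArc P c n) (hQ : IsArc Q d m) (hPQ : Disjoint P Q) (hPE : P ∩ E = {c})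
    (hQE : Q ∩ E = {d}) (hn : n ∈ N) (hm : m ∈ N) :
    ∃ L R : Set X, Disjoint L R ∧ L ⊆ E ∪ P ∪ Q ∧ R ⊆ E ∪ P ∪ Q ∧
      (∃ a ∈ N, IsArc L x a) ∧ ∃ b ∈ N, IsArc R y b := by
  have key : ∀ {c d n m : X} {P Q E₁ E₂ : Set X}, IsArc P c n → IsArc Q d m → Disjoint P Q →
      P ∩ E = {c} → Q ∩ E = {d} → n ∈ N → m ∈ N → E₁ ⊆ E → E₂ ⊆ E → Disjoint E₁ E₂ →
      IsArc E₁ x c → IsArc E₂ d y → ∃ L R : Set X, Disjoint L R ∧ L ⊆ E ∪ P ∪ Q ∧ R ⊆ E ∪ P ∪ Q ∧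
      (∃ a ∈ N, IsArc L x a) ∧ ∃ b ∈ N, IsArc R y b := by
    intro c d n m P Q E₁ E₂ hP hQ hPQ hPE hQE hn hm h₁ h₂ h12 ha hb
    refine ⟨E₁ ∪ P, E₂ ∪ Q, ?_, ?_, ?_, ⟨n, hn, ha.trans hP ?_⟩, ⟨m, hm, hb.symm.trans hQ ?_⟩⟩
    · rw [disjoint_left]
      rintro z (hz | hz) (hz' | hz')
      · exact disjoint_left.1 h12 hz hz'
      · have : z = d := hQE.subset ⟨hz', h₁ hz⟩
        subst this
        exact disjoint_left.1 h12 hz hb.left_mem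
      · have : z = c := hPE.subset ⟨hz, h₂ hz'⟩
        subst this
        exact disjoint_left.1 h12 ha.right_mem hz'
      · exact disjoint_left.1 hPQ hz hz'
    · intro z hz
      rcases hz with hz | hz
      · exact Or.inl (Or.inl (h₁ hz))
      · exact Or.inl (Or.inr hz)
    · intro z hz
      rcases hz with hz | hz
      · exact Or.inl (Or.inl (h₂ hz))
      · exact Or.inr hz
    · rintro z ⟨hz, hzP⟩
      exact hPE.subset ⟨hzP, h₁ hz⟩
    · rintro z ⟨hz, hzQ⟩
      exact hQE.subset ⟨hzQ, h₂ hz⟩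
  have hcd : c ≠ d := by
    rintro rfl
    exact disjoint_left.1 hPQ hP.left_mem hQ.left_mem
  obtain ⟨E₁, h₁, E₂, h₂, h12, ⟨ha, hb⟩ | ⟨ha, hb⟩⟩ :=
    hE.exists_disjoint_ends (hPE.ge rfl).2 (hQE.ge rfl).2 hcd
  · exact key hP hQ hPQ hPE hQE hn hm h₁ h₂ h12 ha hb
  · obtain ⟨L, R, h⟩ := key hQ hP hPQ.symm hQE hPE hm hn h₁ h₂ h12 ha hb
    rw [union_right_comm] at h
    exact ⟨L, R, h⟩

/-- A Menger type theorem: if no point separates `{x, y}` from `N` inside `U`, then there are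
disjoint arcs in `U` from `x` and from `y` to `N`. -/
theorem exists_disjoint_arcs {U N : Set X} {x y : X} (hxy : JoinedIn U x y)
    (h : ∀ z, ∃ s ∈ ({x, y} : Set X), ∃ n ∈ N, JoinedIn (U \ {z}) s n) :
    ∃ L R : Set X, Disjoint L R ∧ L ⊆ U ∧ R ⊆ U ∧
      (∃ a ∈ N, IsArc L x a) ∧ ∃ b ∈ N, IsArc R y b := by
  set Z : Set X := {z | ∃ E ⊆ U, IsArc E x y ∧ z ∈ E} with hZ
  have hZxy : ({x, y} : Set X) ⊆ Z := by
    obtain ⟨E, hEU, hE⟩ := hxy.exists_isArc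
    rintro z (rfl | rfl)
    · exact ⟨E, hEU, hE, hE.left_mem⟩
    · exact ⟨E, hEU, hE, hE.right_mem⟩
  obtain ⟨s, hs, n, hn, hsn⟩ := h x
  obtain ⟨A, hAU, a, b, γ, hab, hγ, hinj, rfl, rfl, rfl⟩ := hsn.exists_isArc
  set I : Set ℝ := {t | t ∈ Icc a b ∧ γ t ∈ Z} with hI
  have hIa : a ∈ I := ⟨left_mem_Icc.2 hab, hZxy hs⟩
  have hIb : BddAbove I := ⟨b, fun t ht => ht.1.2⟩
  set τ := sSup I with hτ
  have haτ : a ≤ τ := le_csSup hIb hIa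
  have hτb : τ ≤ b := csSup_le ⟨a, hIa⟩ fun t ht => ht.1.2
  obtain ⟨s', hs', n', hn', hsn'⟩ := h (γ τ)
  obtain ⟨Q, hQU, hQ⟩ := hsn'.exists_isArc
  have hτQ : γ τ ∈ Qᶜ := fun hq => (hQU hq).2 rfl
  have hnhds := (hγ τ ⟨haτ, hτb⟩).preimage_mem_nhdsWithin (hQ.isClosed.isOpen_compl.mem_nhds hτQ)
  obtain ⟨δ, hδ, hball⟩ := Metric.mem_nhdsWithin_iff.1 hnhds
  obtain ⟨t, ht, htδ⟩ := exists_lt_of_lt_csSup ⟨a, hIa⟩ (show τ - δ < sSup I by linarith)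
  have htτ : t ≤ τ := le_csSup hIb ht
  obtain ⟨E, hEU, hE, htE⟩ := ht.2
  set B := γ '' Icc t τ with hB
  have hBc : IsClosed B :=
    (isCompact_Icc.image_of_continuousOn (hγ.mono (Icc_subset_Icc ht.1.1 hτb))).isClosed
  have hBQ : Disjoint B Q := by
    rw [disjoint_left]
    rintro _ ⟨u, hu, rfl⟩
    refine hball ⟨?_, ht.1.1.trans hu.1, hu.2.trans hτb⟩
    rw [mem_ball, Real.dist_eq, abs_lt]
    constructor <;> linarith [hu.1, hu.2]
  have hA' := isArc_image hγ hinj ht.1.1 ht.1.2 le_rfl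
  obtain ⟨c, hcE, P, P', hP, -, hPP, -, hPE⟩ :=
    hA'.symm.exists_firstHit hE.isClosed ⟨γ t, hA'.left_mem, htE⟩
  have hPA : P ⊆ γ '' Icc t b := hPP ▸ subset_union_left
  have hPBZ : ∀ z ∈ P, z ∉ B → z ∉ Z := by
    intro z hz hzB hzZ
    obtain ⟨u, hu, rfl⟩ := hPA hz
    have : u ≤ τ := le_csSup hIb ⟨⟨ht.1.1.trans hu.1, hu.2⟩, hzZ⟩
    exact hzB ⟨u, ⟨hu.1, this⟩, rfl⟩
  have hPU : P ⊆ U := fun z hz => by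
    obtain ⟨u, hu, rfl⟩ := hPA hz
    exact (hAU ⟨u, ⟨ht.1.1.trans hu.1, hu.2⟩, rfl⟩).1
  have hcB : c ∈ B := by
    by_contra hcB
    exact hPBZ c hP.right_mem hcB ⟨E, hEU, hE, hcE⟩
  have hs'E : s' ∈ E := by
    rcases hs' with rfl | rfl
    · exact hE.left_mem
    · exact hE.right_mem
  obtain ⟨q, hqE, Q₁, Q₂, hQ₁, -, hQQ, -, hQE⟩ :=
    hQ.symm.exists_firstHit hE.isClosed ⟨s', hQ.left_mem, hs'E⟩
  have hQ₁Q : Q₁ ⊆ Q := hQQ ▸ subset_union_left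
  have hQ₁U : Q₁ ⊆ U := fun z hz => (hQU (hQ₁Q hz)).1
  have hcq : c ≠ q := by
    rintro rfl
    exact disjoint_left.1 hBQ hcB (hQ₁Q hQ₁.right_mem)
  by_cases hPQ : Disjoint P Q₁
  · obtain ⟨L, R, h1, h2, h3, h4⟩ :=
      hE.exists_disjoint_extensions hP.symm hQ₁.symm hPQ hPE hQE hn hn'
    have hsub : E ∪ P ∪ Q₁ ⊆ U := union_subset (union_subset hEU hPU) hQ₁U
    exact ⟨L, R, h1, h2.trans hsub, h3.trans hsub, h4⟩
  exfalso
  obtain ⟨w, hwP, hwQ⟩ := not_disjoint_iff.1 hPQ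
  have hpc := hP.isPathConnected.union hQ₁.isPathConnected ⟨w, hwP, hwQ⟩
  obtain ⟨G, hGPQ, hG⟩ := (hpc.joinedIn c (Or.inl hP.right_mem) q
    (Or.inr hQ₁.right_mem)).exists_isArc
  have hGE : G ∩ E = {c, q} := by
    apply Subset.antisymm
    · rintro z ⟨hz, hzE⟩
      rcases hGPQ hz with hz | hz
      · exact Or.inl (hPE.subset ⟨hz, hzE⟩)
      · exact Or.inr (hQE.subset ⟨hz, hzE⟩)
    · rintro z (rfl | rfl)
      · exact ⟨hG.left_mem, hcE⟩
      · exact ⟨hG.right_mem, hqE⟩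
  obtain ⟨g, hgG, hgB⟩ : ∃ g ∈ G, g ∉ B ∪ Q₁ := by
    by_contra! hsub
    obtain ⟨z, -, hz⟩ := isPreconnected_closed_iff.1 hG.isPreconnected B Q₁ hBc hQ₁.isClosed hsub
      ⟨c, hG.left_mem, hcB⟩ ⟨q, hG.right_mem, hQ₁.right_mem⟩
    exact disjoint_left.1 hBQ hz.1 (hQ₁Q hz.2)
  rw [mem_union, not_or] at hgB
  obtain ⟨E', hE', hE'arc, hGE'⟩ := hE.exists_reroute hG hcq hGE
  refine hPBZ g ((hGPQ hgG).resolve_right hgB.2) hgB.1 ⟨E', hE'.trans ?_, hE'arc, hGE' hgG⟩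
  exact union_subset hEU (hGPQ.trans (union_subset hPU hQ₁U))

end Menger

/-- Infinite concatenation of paths whose ranges shrink to a point. -/
theorem JoinedIn.of_seq {X : Type} [TopologicalSpace X] {S : ℕ → Set X} {l : ℕ → X} {p : X}
    (h : ∀ n, JoinedIn (S n) (l n) (l (n + 1)))
    (hS : ∀ W ∈ 𝓝 p, ∃ K, ∀ n, K ≤ n → S n ⊆ W) :
    JoinedIn (insert p (⋃ n, S n)) (l 0) p := by
  choose γ hγ using h
  set F : ℝ → X := fun t => (γ ⌊t⌋₊).extend (t - ⌊t⌋₊) with hF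
  have hFS : ∀ t, F t ∈ S ⌊t⌋₊ := by
    intro t
    obtain ⟨u, hu⟩ : F t ∈ range (γ ⌊t⌋₊) := by
      rw [← (γ ⌊t⌋₊).extend_range]; exact ⟨_, rfl⟩
    rw [← hu]; exact hγ _ _
  have hFn : ∀ n : ℕ, ∀ t ∈ Icc (n : ℝ) (n + 1), F t = (γ n).extend (t - n) := by
    intro n t ht
    rcases ht.2.eq_or_lt with h | h
    · have : ⌊t⌋₊ = n + 1 := by rw [h]; exact_mod_cast Nat.floor_natCast (n + 1)
      simp only [hF]
      rw [this, h]
      simp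
    · have : ⌊t⌋₊ = n := (Nat.floor_eq_iff ((Nat.cast_nonneg n).trans ht.1)).2 ⟨ht.1, h⟩
      simp only [hF]
      rw [this]
  have hFon : ∀ n : ℕ, ContinuousOn F (Iic n) := by
    intro n
    induction n with
    | zero =>
      refine continuousOn_const (c := l 0) |>.congr fun t ht => ?_
      have ht' : t ≤ 0 := by simpa using ht
      have h0 : ⌊t⌋₊ = 0 := Nat.floor_of_nonpos ht'
      simp only [hF]
      rw [h0]
      exact (γ 0).extend_of_le_zero (by simpa using ht')
    | succ n ih =>
      have hcup : Iic ((n + 1 : ℕ) : ℝ) = Iic (n : ℝ) ∪ Icc n (n + 1) := by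
        push_cast
        exact (Iic_union_Icc_eq_Iic (by linarith)).symm
      rw [hcup]
      refine ih.union_of_isClosed ?_ isClosed_Iic isClosed_Icc
      refine ContinuousOn.congr ?_ (hFn n)
      exact ((γ n).continuous_extend.comp (continuous_id.sub continuous_const)).continuousOn
  have hFc : Continuous F := continuous_iff_continuousAt.2 fun t =>
    (hFon (⌊t⌋₊ + 1)).continuousAt (Iic_mem_nhds (by push_cast; exact Nat.lt_floor_add_one t))
  set G : ℝ → X := fun s => if s < 1 then F (s / (1 - s)) else p with hG
  refine JoinedIn.ofLine (f := G) (fun s hs => ?_) ?_ ?_ ?_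
  · rcases hs.2.lt_or_eq with h | rfl
    · refine ContinuousAt.continuousWithinAt ?_
      have : ContinuousAt (fun s : ℝ => F (s / (1 - s))) s :=
        hFc.continuousAt.comp (continuousAt_id.div (by fun_prop) (by linarith))
      refine this.congr ?_
      filter_upwards [Iio_mem_nhds h] with u hu
      simp only [hG]
      rw [if_pos (mem_Iio.1 hu)]
    · intro W hW
      have hG1 : G 1 = p := by simp [hG]
      rw [hG1] at hW
      obtain ⟨K, hK⟩ := hS W hW
      refine mem_nhdsWithin_of_mem_nhds
        (Filter.mem_of_superset (Ioi_mem_nhds (show (1 : ℝ) - 1 / (K + 1) < 1 by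
          have : (0 : ℝ) < 1 / (K + 1) := by positivity
          linarith)) fun s hs => ?_)
      simp only [mem_preimage, hG]
      split_ifs with h1
      · refine hK _ ?_ (hFS _)
        have h2 : (0 : ℝ) < 1 - s := by linarith
        refine Nat.le_floor ?_
        rw [le_div_iff₀ h2]
        have h3 : 1 - s < 1 / (K + 1) := by
          have : (1 : ℝ) - 1 / (K + 1) < s := hs
          linarith
        rw [lt_div_iff₀ (by positivity)] at h3
        linarith
      · exact mem_of_mem_nhds hW
  · simp [hG, hF]
  · simp [hG]
  · rintro _ ⟨s, -, rfl⟩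
    simp only [hG]
    split_ifs
    · exact mem_insert_of_mem _ (mem_iUnion.2 ⟨_, hFS _⟩)
    · exact mem_insert _ _

section Limit

variable {X : Type} [MetricSpace X]

theorem IsArc.subset_of_inter_eq_singleton {D C F : Set X} {x d : X} (hD : IsArc D x d)
    (hDC : D ∩ C = {d}) (hF : IsClosed F) (hx : x ∈ F) (h : D \ C ⊆ F) : D ⊆ F := by
  have hsub : D \ {d} ⊆ F := fun z hz => h ⟨hz.1, fun hzC => hz.2 (hDC.subset ⟨hz.1, hzC⟩)⟩
  by_cases hxd : x = d
  · intro z hz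
    by_cases hzd : z = d
    · rwa [hzd, ← hxd]
    · exact hsub ⟨hz, hzd⟩
  intro z hz
  by_cases hzd : z = d
  · subst hzd
    have hacc := hD.isPreconnected.preperfect_of_nontrivial ⟨x, hD.left_mem, z, hz, hxd⟩ z hz
    rw [accPt_principal_iff_clusterPt, ← mem_closure_iff_clusterPt] at hacc
    exact closure_minimal hsub hF hacc
  · exact hsub ⟨hz, hzd⟩

theorem IsPreconnected.subset_left_of_disjoint_isClosed {D A B : Set X} (hD : IsPreconnected D)
    (hA : IsClosed A) (hB : IsClosed B) (hAB : Disjoint A B) (hDAB : D ⊆ A ∪ B)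
    (hDA : (D ∩ A).Nonempty) : D ⊆ A := by
  intro z hz
  refine (hDAB hz).resolve_right fun hzB => ?_
  obtain ⟨w, -, hw⟩ := isPreconnected_closed_iff.1 hD A B hA hB hDAB hDA ⟨z, hz, hzB⟩
  exact disjoint_left.1 hAB hw.1 hw.2

/-- An arc contains only finitely many almost disjoint connected sets joining two disjoint
closed sets. -/
theorem IsArc.not_frequently_crossing {M C C' : Set X} {x y : X} (hM : IsArc M x y)
    (hC : IsClosed C) (hC' : IsClosed C') (hCC : Disjoint C C') {σ : ℕ → Set X}
    (hσ : ∀ n m, n ≠ m → (σ n ∩ σ m).Subsingleton) :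
    ¬ ∃ᶠ n in Filter.atTop, ∃ τ ⊆ σ n, IsPreconnected τ ∧ τ ⊆ M ∧ (τ ∩ C).Nonempty ∧
      (τ ∩ C').Nonempty := by
  intro hfr
  obtain ⟨φ, hφ, hτ⟩ := Filter.extraction_of_frequently_atTop hfr
  obtain ⟨a, b, γ, hab, hγ, hinj, rfl, rfl, rfl⟩ := hM
  choose τ hτσ hpre hτM hτC hτC' using hτ
  have hu : ∀ n, ∃ u ∈ Icc a b, γ u ∈ τ n ∧ γ u ∈ C := fun n => by
    obtain ⟨z, hz, hzC⟩ := hτC n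
    obtain ⟨u, hu, rfl⟩ := hτM n hz
    exact ⟨u, hu, hz, hzC⟩
  have hw : ∀ n, ∃ w ∈ Icc a b, γ w ∈ τ n ∧ γ w ∈ C' := fun n => by
    obtain ⟨z, hz, hzC⟩ := hτC' n
    obtain ⟨u, hu, rfl⟩ := hτM n hz
    exact ⟨u, hu, hz, hzC⟩
  choose u huI huτ huC using hu
  choose w hwI hwτ hwC using hw
  have hmem : ∀ n s, s ∈ Icc a b → (u n ≤ s ∧ s ≤ w n ∨ w n ≤ s ∧ s ≤ u n) → γ s ∈ τ n := by
    intro n s hs h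
    have hsplit := isArc_image hγ hinj le_rfl hs.1 hs.2
    have hsplit' := isArc_image hγ hinj hs.1 hs.2 le_rfl
    refine hsplit.mem_of_separates hsplit' ?_ (hpre n) ?_ ?_ ?_
    · rw [← hinj.image_inter (Icc_subset_Icc_right hs.2) (Icc_subset_Icc_left hs.1),
        Icc_inter_Icc_eq_singleton hs.1 hs.2, image_singleton]
    · rw [← image_union, Icc_union_Icc_eq_Icc hs.1 hs.2]
      exact hτM n
    · rcases h with h | h
      · exact ⟨_, huτ n, u n, ⟨(huI n).1, h.1⟩, rfl⟩
      · exact ⟨_, hwτ n, w n, ⟨(hwI n).1, h.1⟩, rfl⟩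
    · rcases h with h | h
      · exact ⟨_, hwτ n, w n, ⟨h.2, (hwI n).2⟩, rfl⟩
      · exact ⟨_, huτ n, u n, ⟨h.2, (huI n).2⟩, rfl⟩
  obtain ⟨⟨u₀, w₀⟩, hmem₀, ψ, hψ, hlim⟩ := (isCompact_Icc.prod isCompact_Icc).tendsto_subseq
    (x := fun n => (u n, w n)) (fun n => ⟨huI n, hwI n⟩)
  have hulim : Filter.Tendsto (u ∘ ψ) Filter.atTop (𝓝 u₀) := (Prod.tendsto_iff _ _).1 hlim |>.1
  have hwlim : Filter.Tendsto (w ∘ ψ) Filter.atTop (𝓝 w₀) := (Prod.tendsto_iff _ _).1 hlim |>.2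
  have hclos : ∀ {v : ℕ → ℝ} {v₀ : ℝ} {K : Set X}, IsClosed K → (∀ n, v n ∈ Icc a b) →
      v₀ ∈ Icc a b → (∀ n, γ (v n) ∈ K) → Filter.Tendsto v Filter.atTop (𝓝 v₀) → γ v₀ ∈ K := by
    intro v v₀ K hK hv hv₀ hvK hvl
    have := (hγ v₀ hv₀).tendsto.comp
      (tendsto_nhdsWithin_iff.2 ⟨hvl, Filter.Eventually.of_forall hv⟩)
    exact hK.mem_of_tendsto this (Filter.Eventually.of_forall hvK)
  have hne : u₀ ≠ w₀ := by
    intro h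
    have h1 := hclos hC (fun n => huI (ψ n)) hmem₀.1 (fun n => huC (ψ n)) hulim
    have h2 := hclos hC' (fun n => hwI (ψ n)) hmem₀.2 (fun n => hwC (ψ n)) hwlim
    simp only at h1 h2
    rw [h] at h1
    exact disjoint_left.1 hCC h1 h2
  obtain ⟨s, t, hst, hs, ht, hev⟩ : ∃ s t, s < t ∧ s ∈ Icc a b ∧ t ∈ Icc a b ∧
      ∀ᶠ n in Filter.atTop, γ s ∈ τ (ψ n) ∧ γ t ∈ τ (ψ n) := by
    have ha : a ≤ u₀ := hmem₀.1.1
    have hb : u₀ ≤ b := hmem₀.1.2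
    have ha' : a ≤ w₀ := hmem₀.2.1
    have hb' : w₀ ≤ b := hmem₀.2.2
    rcases hne.lt_or_gt with h | h
    · obtain ⟨s, hs1, hs2⟩ := exists_between h
      obtain ⟨t, ht1, ht2⟩ := exists_between hs2
      have hsI : s ∈ Icc a b := ⟨by linarith, by linarith⟩
      have htI : t ∈ Icc a b := ⟨by linarith, by linarith⟩
      refine ⟨s, t, ht1, hsI, htI, ?_⟩
      filter_upwards [hulim.eventually_lt_const hs1, hwlim.eventually_const_lt ht2] with n h1 h2
      simp only [Function.comp] at h1 h2
      exact ⟨hmem _ _ hsI (Or.inl ⟨h1.le, by linarith⟩),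
        hmem _ _ htI (Or.inl ⟨by linarith, h2.le⟩)⟩
    · obtain ⟨s, hs1, hs2⟩ := exists_between h
      obtain ⟨t, ht1, ht2⟩ := exists_between hs2
      have hsI : s ∈ Icc a b := ⟨by linarith, by linarith⟩
      have htI : t ∈ Icc a b := ⟨by linarith, by linarith⟩
      refine ⟨s, t, ht1, hsI, htI, ?_⟩
      filter_upwards [hwlim.eventually_lt_const hs1, hulim.eventually_const_lt ht2] with n h1 h2
      simp only [Function.comp] at h1 h2
      exact ⟨hmem _ _ hsI (Or.inr ⟨h1.le, by linarith⟩),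
        hmem _ _ htI (Or.inr ⟨by linarith, h2.le⟩)⟩
  obtain ⟨N, hN⟩ := Filter.eventually_atTop.1 hev
  have h1 := hN N le_rfl
  have h2 := hN (N + 1) (Nat.le_succ N)
  have hsub := hσ (φ (ψ N)) (φ (ψ (N + 1))) ((hφ.comp hψ) (Nat.lt_succ_self N)).ne
  exact hst.ne (hinj hs ht (hsub ⟨hτσ _ h1.1, hτσ _ h2.1⟩ ⟨hτσ _ h1.2, hτσ _ h2.2⟩))

/-- The initial pieces of a sequence of pairs of disjoint arcs which are modified closer and
closer to `p` converge to a path ending at `p`. -/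
theorem exists_joinedIn_of_disjoint_arcs {V L R : ℕ → Set X} {x y p : X}
    (hVo : ∀ n, IsOpen (V n)) (hV : ∀ n, closure (V (n + 1)) ⊆ V n)
    (hbasis : ∀ W ∈ 𝓝 p, ∃ k, V k ⊆ W)
    (hL0 : L 0 = {x}) (hL : ∀ n, ∃ a ∈ V (n + 1), IsArc (L n) x a)
    (hR : ∀ n, ∃ b ∈ V (n + 1), IsArc (R n) y b) (hd : ∀ n, Disjoint (L n) (R n))
    (hsub : ∀ n, L (n + 1) ∪ R (n + 1) ⊆ L n ∪ R n ∪ V n) :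
    ∃ Λ : Set X, JoinedIn (insert p Λ) x p ∧ ∀ z ∈ Λ, ∃ n, ∀ m, n ≤ m → z ∈ L m := by
  choose a haV hLa using hL
  choose b hbV hRb using hR
  have hVanti : Antitone V := antitone_nat_of_succ_le fun n => subset_closure.trans (hV n)
  set C : ℕ → Set X := fun n => closure (V n) with hCdef
  have hCanti : Antitone C := fun n m h => closure_mono (hVanti h)
  have hCc : ∀ n, IsClosed (C n) := fun n => isClosed_closure
  have haC : ∀ n m, n ≤ m → a m ∈ C n := fun n m h =>
    subset_closure (hVanti (by omega) (haV m))
  have hF : ∀ k m, k ≤ m → L m ∪ R m ⊆ L k ∪ R k ∪ V k := by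
    intro k m h
    induction m, h using Nat.le_induction with
    | base => exact subset_union_left
    | succ m h ih =>
      exact (hsub m).trans (union_subset ih ((hVanti h).trans subset_union_right))
  have hfirst : ∀ n m, n ≤ m → ∃ d, ∃ D ⊆ L m, IsArc D x d ∧ D ∩ C n = {d} := by
    intro n m h
    obtain ⟨d, -, D, D', hD, -, hDD, -, hDC⟩ :=
      (hLa m).exists_firstHit (hCc n) ⟨a m, (hLa m).right_mem, haC n m h⟩
    exact ⟨d, D, hDD ▸ subset_union_left, hD, hDC⟩
  choose l α hαL hα hαC using fun n => hfirst n n le_rfl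
  have hlC : ∀ n, l n ∈ C n := fun n => ((hαC n).ge rfl).2
  have hαm : ∀ n m, n ≤ m → α n ⊆ L m := by
    intro n m h
    induction m, h using Nat.le_induction with
    | base => exact hαL n
    | succ m h ih =>
      obtain ⟨d, D, hDL, hD, hDC⟩ := hfirst n (m + 1) (by omega)
      have hDF : D ⊆ L m ∪ R m := by
        refine hD.subset_of_inter_eq_singleton hDC ((hLa m).isClosed.union (hRb m).isClosed)
          (Or.inl (hLa m).left_mem) fun z hz => ?_
        refine (hsub m (Or.inl (hDL hz.1))).resolve_right fun hzV => ?_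
        exact hz.2 (subset_closure (hVanti h hzV))
      have hDLm : D ⊆ L m := hD.isPreconnected.subset_left_of_disjoint_isClosed
        (hLa m).isClosed (hRb m).isClosed (hd m) hDF ⟨x, hD.left_mem, (hLa m).left_mem⟩
      rcases (hLa m).subset_or_subset hD.isPreconnected hDLm (hα n).isPreconnected ih
        hD.left_mem (hα n).left_mem with h1 | h1
      · have e : d = l n := (hαC n).subset ⟨h1 hD.right_mem, (hDC.ge rfl).2⟩
        rw [← (hα n).eq_of_isPreconnected hD.isPreconnected h1 hD.left_mem (e ▸ hD.right_mem)]
        exact hDL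
      · exact h1.trans hDL
  have hαmono : Monotone α := by
    refine monotone_nat_of_le_succ fun n => ?_
    rcases (hLa (n + 1)).subset_or_subset (hα n).isPreconnected (hαm n (n + 1) (by omega))
      (hα (n + 1)).isPreconnected (hαL (n + 1)) (hα n).left_mem (hα (n + 1)).left_mem with h | h
    · exact h
    · have e : l (n + 1) = l n := (hαC n).subset
        ⟨h (hα (n + 1)).right_mem, hCanti (Nat.le_succ n) (hlC (n + 1))⟩
      exact ((hα n).eq_of_isPreconnected (hα (n + 1)).isPreconnected h (hα (n + 1)).left_mem
        (e ▸ (hα (n + 1)).right_mem)).ge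
  have hσ : ∀ n, ∃ σ ⊆ α (n + 1), IsArc σ (l n) (l (n + 1)) ∧ α n ∩ σ ⊆ {l n} := by
    intro n
    obtain ⟨A, σ, hA, hσ, hAσ, hi⟩ :=
      (hα (n + 1)).split (hαmono (Nat.le_succ n) (hα n).right_mem)
    have hAα : A ⊆ α (n + 1) := hAσ ▸ subset_union_left
    refine ⟨σ, hAσ ▸ subset_union_right, hσ, ?_⟩
    rw [← hi]
    refine inter_subset_inter_left _ ?_
    rcases (hα (n + 1)).subset_or_subset (hα n).isPreconnected (hαmono (Nat.le_succ n))
      hA.isPreconnected hAα (hα n).left_mem hA.left_mem with h | h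
    · exact h
    · exact ((hα n).eq_of_isPreconnected hA.isPreconnected h hA.left_mem hA.right_mem).ge
  choose σ hσα hσarc hσi using hσ
  have hσss : ∀ n m, n ≠ m → (σ n ∩ σ m).Subsingleton := by
    have aux : ∀ n m, n < m → (σ n ∩ σ m).Subsingleton := by
      intro n m h
      refine subsingleton_singleton.anti ((inter_subset_inter_left _ ?_).trans (hσi m))
      exact (hσα n).trans (hαmono h)
    intro n m h
    rcases h.lt_or_gt with h | h
    · exact aux n m h
    · rw [inter_comm]; exact aux m n h
  refine ⟨⋃ n, σ n, ?_, ?_⟩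
  · have hl0 : l 0 = x := by
      have := hαL 0 (hα 0).right_mem
      rwa [hL0] at this
    rw [← hl0]
    refine JoinedIn.of_seq (fun n => (hσarc n).joinedIn) fun W hW => ?_
    obtain ⟨k, hk⟩ := hbasis W hW
    by_contra! hcon
    have hdisj : Disjoint (C (k + 1)) (V k)ᶜ := disjoint_compl_right_iff_subset.2 (hV k)
    have hcross : ∀ M : Set X, ∀ u v, IsArc M u v → _ := fun M u v hM =>
      hM.not_frequently_crossing (hCc (k + 1)) (hVo k).isClosed_compl hdisj hσss
    have hor := Filter.frequently_or_distrib.1.mt (not_or.2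
      ⟨hcross _ _ _ (hLa (k + 1)), hcross _ _ _ (hRb (k + 1))⟩)
    refine hor (Filter.frequently_atTop.2 fun K => ?_)
    obtain ⟨n, hn, hnW⟩ := hcon (max K (k + 1))
    obtain ⟨z, hzσ, hzW⟩ := not_subset.1 hnW
    have hzV : z ∉ V k := fun h => hzW (hk h)
    obtain ⟨τ₀, hτ₀σ, hτ₀⟩ := (hσarc n).exists_subarc hzσ (hσarc n).left_mem
    obtain ⟨e, heC, τ, τ', hτ, -, hττ, -, hτC⟩ := hτ₀.exists_firstHit (hCc (k + 1))
      ⟨l n, hτ₀.right_mem, hCanti ((le_max_right _ _).trans hn) (hlC n)⟩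
    have hτσ : τ ⊆ σ n := Subset.trans (hττ ▸ subset_union_left) hτ₀σ
    have hσF : ∀ w ∈ σ n, w ∉ V (k + 1) → w ∈ L (k + 1) ∪ R (k + 1) := by
      intro w hw hwV
      have hkn : k + 1 ≤ n + 1 := ((le_max_right _ _).trans hn).trans (Nat.le_succ n)
      exact (hF (k + 1) (n + 1) hkn (Or.inl (hαL (n + 1) (hσα n hw)))).resolve_right hwV
    have hzF := hσF z hzσ fun h => hzV (hVanti (Nat.le_succ k) h)
    have hτF : τ ⊆ L (k + 1) ∪ R (k + 1) :=
      hτ.subset_of_inter_eq_singleton hτC ((hLa (k + 1)).isClosed.union (hRb (k + 1)).isClosed)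
        hzF fun w hw => hσF w (hτσ hw.1) fun h => hw.2 (subset_closure h)
    refine ⟨n, (le_max_left _ _).trans hn, hzF.imp (fun h => ?_) fun h => ?_⟩
    · exact ⟨τ, hτσ, hτ.isPreconnected, hτ.isPreconnected.subset_left_of_disjoint_isClosed
        (hLa _).isClosed (hRb _).isClosed (hd _) hτF ⟨z, hτ.left_mem, h⟩,
        ⟨e, hτ.right_mem, heC⟩, ⟨z, hτ.left_mem, hzV⟩⟩
    · exact ⟨τ, hτσ, hτ.isPreconnected, hτ.isPreconnected.subset_left_of_disjoint_isClosed
        (hRb _).isClosed (hLa _).isClosed (hd _).symm (union_comm _ _ ▸ hτF) ⟨z, hτ.left_mem, h⟩,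
        ⟨e, hτ.right_mem, heC⟩, ⟨z, hτ.left_mem, hzV⟩⟩
  · intro z hz
    obtain ⟨n, hn⟩ := mem_iUnion.1 hz
    exact ⟨n + 1, fun m hm => hαm (n + 1) m hm (hσα n hn)⟩

end Limit

section Closure

variable {X : Type} [MetricSpace X] {T : Set X} {p : X}

theorem exists_isOpen_isPathConnected_subset [LocallyPathConnectedSpace X] {U : Set X}
    (hU : U ∈ 𝓝 p) : ∃ W ⊆ U, IsOpen W ∧ IsPathConnected W ∧ p ∈ W := by
  obtain ⟨O, hOU, hO, hp⟩ := _root_.mem_nhds_iff.1 hU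
  exact ⟨_, pathComponentIn_subset.trans hOU, hO.pathComponentIn p,
    isPathConnected_pathComponentIn hp, mem_pathComponentIn_self hp⟩

/-- If `p` does not separate points of `T` in connected neighbourhoods of `p`, then neither does
any other point, for points of `T` close to `p`. -/
theorem CyclicallyConnected.exists_nhds_joinedIn_of_mem [CompactSpace X]
    [LocallyPathConnectedSpace X] (hT : CyclicallyConnected T) (hTd : Dense T) (hpT : p ∉ T)
    (hsep : ∀ V, IsOpen V → IsPathConnected V → p ∈ V → ∀ u ∈ T ∩ V, ∀ v ∈ T ∩ V,
      JoinedIn (V \ {p}) u v)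
    {V : Set X} (hVo : IsOpen V) (hV : IsPathConnected V) (hpV : p ∈ V) :
    ∃ W ⊆ V, IsOpen W ∧ p ∈ W ∧ ∀ x, ∀ u ∈ T ∩ W, ∀ v ∈ T ∩ W, u ≠ x → v ≠ x →
      JoinedIn (V \ {x}) u v := by
  by_contra! hcon
  obtain ⟨a₀, ha₀V, ha₀T⟩ := hTd.inter_open_nonempty V hVo ⟨p, hpV⟩
  have ha₀p : 0 < dist a₀ p := dist_pos.2 fun h => hpT (h ▸ ha₀T)
  obtain ⟨ε₀, hε₀, hball⟩ := Metric.isOpen_iff.1 hVo p hpV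
  obtain ⟨ε, hε, hεlt⟩ := exists_between (lt_min hε₀ ha₀p)
  have hεV : closedBall p ε ⊆ V :=
    (closedBall_subset_ball (hεlt.trans_le (min_le_left _ _))).trans hball
  have hεa : ε < dist a₀ p := hεlt.trans_le (min_le_right _ _)
  have hstep : ∀ k : ℕ, ∃ x w y, dist x p < ε / 2 / (k + 1) ∧ y ∈ T ∧ dist y p = ε ∧
      JoinedIn (V \ {x}) w y ∧ ¬ JoinedIn (V \ {x}) w a₀ := by
    intro k
    have hr : 0 < ε / 2 / (k + 1) := by positivity
    have hrε : ε / 2 / (k + 1) < ε :=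
      (div_le_self (by positivity) (by linarith [Nat.cast_nonneg (α := ℝ) k])).trans_lt
        (by linarith)
    obtain ⟨W, hWb, hWo, hWc, hpW⟩ :=
      exists_isOpen_isPathConnected_subset (ball_mem_nhds p hr)
    have hWV : W ⊆ V :=
      hWb.trans ((ball_subset_ball hrε.le).trans (ball_subset_closedBall.trans hεV))
    obtain ⟨x, u, hu, v, hv, hux, hvx, huv⟩ := hcon W hWV hWo hpW
    have hxW : x ∈ W := by
      by_contra hxW
      refine huv ((hWc.joinedIn u hu.2 v hv.2).mono fun z hz => ⟨hWV hz, ?_⟩)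
      rintro rfl
      exact hxW hz
    obtain ⟨w, hw, hwx, hwa⟩ : ∃ w ∈ T ∩ W, w ≠ x ∧ ¬ JoinedIn (V \ {x}) w a₀ := by
      by_contra! h
      exact huv ((h u hu hux).trans (h v hv hvx).symm)
    have hxr := mem_ball.1 (hWb hxW)
    have hwr := mem_ball.1 (hWb hw.2)
    obtain ⟨J, hJT, hJ, hwJ, haJ⟩ := hT w hw.1 a₀ ha₀T
    have hwa₀ : w ≠ a₀ := by
      rintro rfl
      linarith
    have hxa₀ : x ≠ a₀ := by
      rintro rfl
      linarith
    obtain ⟨A, hAJ, hA, hxA⟩ : ∃ A ⊆ J, IsArc A w a₀ ∧ x ∉ A := by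
      obtain ⟨A, B, hA, hB, hABJ, hAB⟩ := hJ.split hwJ haJ hwa₀
      by_cases hx : x ∈ A
      · refine ⟨B, hABJ ▸ subset_union_right, hB, fun hxB => ?_⟩
        rcases hAB.subset ⟨hx, hxB⟩ with h | h
        · exact hwx h.symm
        · exact hxa₀ h
      · exact ⟨A, hABJ ▸ subset_union_left, hA, hx⟩
    have hcl : IsClosed {z | ε ≤ dist z p} := isClosed_le continuous_const (by fun_prop)
    obtain ⟨y, hy, S, S', hS, -, hSA, -, hSC⟩ :=
      hA.exists_firstHit hcl ⟨a₀, hA.right_mem, hεa.le⟩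
    have hSA' : S ⊆ A := hSA ▸ subset_union_left
    have hSb : S ⊆ closedBall p ε := by
      refine hS.subset_of_inter_eq_singleton hSC isClosed_closedBall ?_ fun z hz => ?_
      · exact mem_closedBall.2 (hwr.trans hrε).le
      · exact mem_closedBall.2 (not_le.1 hz.2).le
    refine ⟨x, w, y, hxr, hJT (hAJ (hSA' hS.right_mem)),
      le_antisymm (mem_closedBall.1 (hSb hS.right_mem)) hy, ?_, hwa⟩
    refine hS.joinedIn.mono fun z hz => ⟨hεV (hSb hz), ?_⟩
    rintro rfl
    exact hxA (hSA' hz)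
  choose x w y hx hyT hyp hwy hwa using hstep
  have hxε : ∀ k, dist (x k) p < ε / 2 := fun k => (hx k).trans_le
    (div_le_self (by positivity) (by linarith [Nat.cast_nonneg (α := ℝ) k]))
  have hxp : Filter.Tendsto x Filter.atTop (𝓝 p) := by
    rw [tendsto_iff_dist_tendsto_zero]
    refine squeeze_zero (fun _ => dist_nonneg) (fun k => (hx k).le) ?_
    exact tendsto_const_div_atTop_nhds_zero_nat (ε / 2) |>.comp (Filter.tendsto_add_atTop_nat 1)
      |>.congr fun k => by simp
  obtain ⟨y₀, hy₀, φ, hφ, hlim⟩ := (isCompact_sphere p ε).tendsto_subseq (fun k => hyp k)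
  obtain ⟨Y, hYV, hYo, hYc, hyY⟩ := exists_isOpen_isPathConnected_subset (p := y₀)
    (U := V ∩ {z | ε / 2 < dist z p})
    ((hVo.inter (isOpen_lt continuous_const (by fun_prop))).mem_nhds
      ⟨hεV (sphere_subset_closedBall hy₀), by
        rw [mem_ofPred_eq, mem_sphere.1 hy₀]; linarith⟩)
  obtain ⟨N, hN⟩ := Filter.eventually_atTop.1 (hlim.eventually (hYo.mem_nhds hyY))
  have hz : y (φ N) ∈ Y := hN N le_rfl
  obtain ⟨E, hEV, hE⟩ := (hsep V hVo hV hpV _ ⟨hyT (φ N), (hYV hz).1⟩ _ ⟨ha₀T, ha₀V⟩).exists_isArc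
  have hpE : p ∈ Eᶜ := fun h => (hEV h).2 rfl
  obtain ⟨M, hM⟩ := Filter.eventually_atTop.1
    ((hxp.comp hφ.tendsto_atTop).eventually (hE.isClosed.isOpen_compl.mem_nhds hpE))
  set n := max N M
  refine hwa (φ n) ((hwy (φ n)).trans (JoinedIn.trans (y := y (φ N)) ?_ ?_))
  · refine (hYc.joinedIn _ (hN n (le_max_left _ _)) _ hz).mono fun z hz => ⟨(hYV hz).1, ?_⟩
    rintro rfl
    exact lt_asymm (hxε (φ n)) (hYV hz).2
  · refine hE.joinedIn.mono fun z hz => ⟨(hEV hz).1, ?_⟩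
    rintro rfl
    exact hM n (le_max_right _ _) hz

theorem CyclicallyConnected.exists_nhds_joinedIn [CompactSpace X]
    [LocallyPathConnectedSpace X] (hT : CyclicallyConnected T) (hTd : Dense T) (hpT : p ∉ T)
    (hsep : ∀ V, IsOpen V → IsPathConnected V → p ∈ V → ∀ u ∈ T ∩ V, ∀ v ∈ T ∩ V,
      JoinedIn (V \ {p}) u v)
    {V : Set X} (hVo : IsOpen V) (hV : IsPathConnected V) (hpV : p ∈ V) :
    ∃ W ⊆ V, IsOpen W ∧ p ∈ W ∧ ∀ x, ∀ u ∈ W, ∀ v ∈ W, u ≠ x → v ≠ x →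
      JoinedIn (V \ {x}) u v := by
  obtain ⟨W, hWV, hWo, hpW, hW⟩ := hT.exists_nhds_joinedIn_of_mem hTd hpT hsep hVo hV hpV
  have hnear : ∀ x, ∀ u ∈ W, u ≠ x → ∃ u' ∈ T ∩ W, u' ≠ x ∧ JoinedIn (V \ {x}) u u' := by
    intro x u hu hux
    obtain ⟨O, hOW, hOo, hOc, huO⟩ := exists_isOpen_isPathConnected_subset
      ((hWo.sdiff isClosed_singleton).mem_nhds (show u ∈ W \ {x} from ⟨hu, hux⟩))
    obtain ⟨u', hu'O, hu'T⟩ := hTd.inter_open_nonempty O hOo ⟨u, huO⟩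
    exact ⟨u', ⟨hu'T, (hOW hu'O).1⟩, (hOW hu'O).2,
      (hOc.joinedIn u huO u' hu'O).mono (hOW.trans (sdiff_subset_sdiff_left hWV))⟩
  refine ⟨W, hWV, hWo, hpW, fun x u hu v hv hux hvx => ?_⟩
  obtain ⟨u', hu', hu'x, hju⟩ := hnear x u hu hux
  obtain ⟨v', hv', hv'x, hjv⟩ := hnear x v hv hvx
  exact (hju.trans (hW x u' hu' v' hv' hu'x hv'x)).trans hjv.symm

/-- A dense cyclicly connected subset of a compact locally path connected metric space can be
enlarged by any given point. -/
theorem CyclicallyConnected.exists_of_dense [CompactSpace X] [LocallyPathConnectedSpace X]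
    (hT : CyclicallyConnected T) (hTd : Dense T) (hpT : p ∉ T) :
    ∃ C, CyclicallyConnected C ∧ T ⊆ C ∧ p ∈ C := by
  by_cases hsep : ∀ V, IsOpen V → IsPathConnected V → p ∈ V → ∀ u ∈ T ∩ V, ∀ v ∈ T ∩ V,
      JoinedIn (V \ {p}) u v
  swap
  · push Not at hsep
    obtain ⟨V, -, hV, -, u, hu, v, hv, huv⟩ := hsep
    obtain ⟨E, hEV, hE⟩ := (hV.joinedIn u hu.2 v hv.2).exists_isArc
    refine hT.exists_of_isArc hE hu.1 hv.1 (p := p) ?_ hpT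
    by_contra hpE
    refine huv (hE.joinedIn.mono fun z hz => ⟨hEV hz, ?_⟩)
    rintro rfl
    exact hpE hz
  obtain ⟨W₀, -, hW₀o, hW₀c, hpW₀⟩ := exists_isOpen_isPathConnected_subset (p := p) Filter.univ_mem
  obtain ⟨V, -, hVP, hVR⟩ := exists_seq_of_step
    (P := fun _ (W : Set X) => IsOpen W ∧ IsPathConnected W ∧ p ∈ W)
    (R := fun n W W' => W' ⊆ ball p (1 / (n + 1)) ∧ closure W' ⊆ W ∧
      ∀ x, ∀ u ∈ W', ∀ v ∈ W', u ≠ x → v ≠ x → JoinedIn (W \ {x}) u v)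
    (a₀ := W₀) ⟨hW₀o, hW₀c, hpW₀⟩ (by
      rintro n W ⟨hWo, hWc, hpW⟩
      obtain ⟨W₁, hW₁W, hW₁o, hpW₁, hj⟩ :=
        hT.exists_nhds_joinedIn hTd hpT hsep hWo hWc hpW
      obtain ⟨ε, hε, hball⟩ := Metric.isOpen_iff.1 hW₁o p hpW₁
      have hn : (0 : ℝ) < 1 / (n + 1) := by positivity
      obtain ⟨W₂, hW₂, hW₂o, hW₂c, hpW₂⟩ := exists_isOpen_isPathConnected_subset
        (ball_mem_nhds p (lt_min hn (half_pos hε)))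
      have hW₂ε : closure W₂ ⊆ W₁ :=
        (closure_minimal (hW₂.trans ((ball_subset_ball (min_le_right _ _)).trans
          ball_subset_closedBall)) isClosed_closedBall).trans
          ((closedBall_subset_ball (half_lt_self hε)).trans hball)
      exact ⟨W₂, ⟨hW₂o, hW₂c, hpW₂⟩, hW₂.trans (ball_subset_ball (min_le_left _ _)),
        hW₂ε.trans hW₁W, fun x u hu v hv => hj x u (hW₂ε (subset_closure hu)) v
          (hW₂ε (subset_closure hv))⟩)
  have hVo : ∀ n, IsOpen (V n) := fun n => (hVP n).1
  have hpV : ∀ n, p ∈ V n := fun n => (hVP n).2.2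
  have hVcl : ∀ n, closure (V (n + 1)) ⊆ V n := fun n => (hVR n).2.1
  have hVV : ∀ n, V (n + 1) ⊆ V n := fun n => subset_closure.trans (hVcl n)
  have hbasis : ∀ W ∈ 𝓝 p, ∃ k, V k ⊆ W := by
    intro W hW
    obtain ⟨ε, hε, hball⟩ := Metric.mem_nhds_iff.1 hW
    obtain ⟨n, hn⟩ := exists_nat_one_div_lt hε
    exact ⟨n + 1, ((hVR n).1.trans (ball_subset_ball hn.le)).trans hball⟩
  have hTV : ∀ n x, p ≠ x → ∃ t ∈ T ∩ V n, t ≠ x := by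
    intro n x hpx
    obtain ⟨t, ht, htT⟩ := hTd.inter_open_nonempty (V n \ {x}) ((hVo n).sdiff isClosed_singleton)
      ⟨p, hpV n, hpx⟩
    exact ⟨t, ⟨htT, ht.1⟩, ht.2⟩
  have hVne : ∀ n x, ∃ v ∈ V n, v ≠ x := by
    intro n x
    by_cases hpx : p = x
    · obtain ⟨t, htV, htT⟩ := hTd.inter_open_nonempty (V n) (hVo n) ⟨p, hpV n⟩
      exact ⟨t, htV, fun h => hpT (hpx.trans h.symm ▸ htT)⟩
    · exact ⟨p, hpV n, hpx⟩
  obtain ⟨l, hl, -⟩ : ∃ l ∈ T ∩ V 1, True := by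
    obtain ⟨t, htV, htT⟩ := hTd.inter_open_nonempty (V 1) (hVo 1) ⟨p, hpV 1⟩
    exact ⟨t, ⟨htT, htV⟩, trivial⟩
  obtain ⟨r, hr, hrl⟩ := hTV 1 l fun h => hpT (h ▸ hl.1)
  obtain ⟨s, hs0, hsP, hsR⟩ := exists_seq_of_step
    (P := fun n (s : Set X × Set X) => Disjoint s.1 s.2 ∧ (∃ a ∈ V (n + 1), IsArc s.1 l a) ∧
      ∃ b ∈ V (n + 1), IsArc s.2 r b)
    (R := fun n s s' => s'.1 ∪ s'.2 ⊆ s.1 ∪ s.2 ∪ V n)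
    (a₀ := ({l}, {r})) ⟨disjoint_singleton.2 hrl.symm, ⟨l, hl.2, isArc_singleton l⟩,
      ⟨r, hr.2, isArc_singleton r⟩⟩ (by
      rintro n ⟨L, R⟩ ⟨hd, ⟨a, ha, hL⟩, ⟨b, hb, hR⟩⟩
      simp only at hd hL hR
      obtain ⟨L', R', hd', hL'U, hR'U, hL', hR'⟩ := exists_disjoint_arcs
        (U := L ∪ R ∪ V n) (N := V (n + 1 + 1)) (x := l) (y := r) (by
          have h1 : JoinedIn (L ∪ R ∪ V n) l a :=
            hL.joinedIn.mono (subset_union_left.trans subset_union_left)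
          have h2 : JoinedIn (L ∪ R ∪ V n) a b :=
            ((hVP n).2.1.joinedIn a (hVV n ha) b (hVV n hb)).mono subset_union_right
          have h3 : JoinedIn (L ∪ R ∪ V n) r b :=
            hR.joinedIn.mono (subset_union_right.trans subset_union_left)
          exact (h1.trans h2).trans h3.symm) (by
          intro z
          obtain ⟨v, hv, hvz⟩ := hVne (n + 1 + 1) z
          have key : ∀ {A : Set X} {s a : X}, A ⊆ L ∪ R → IsArc A s a → a ∈ V (n + 1) → z ∉ A →
              JoinedIn ((L ∪ R ∪ V n) \ {z}) s v := by
            intro A s a hA hAarc ha hz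
            have haz : a ≠ z := fun h => hz (h ▸ hAarc.right_mem)
            have hsa : JoinedIn ((L ∪ R ∪ V n) \ {z}) s a := by
              refine hAarc.joinedIn.mono fun w hw => ⟨Or.inl (hA hw), ?_⟩
              rintro rfl
              exact hz hw
            exact hsa.trans (((hVR n).2.2 z a ha v (hVV _ hv) haz hvz).mono
              (sdiff_subset_sdiff_left subset_union_right))
          by_cases hz : z ∈ L
          · exact ⟨r, Or.inr rfl, v, hv, key subset_union_right hR hb (disjoint_left.1 hd hz)⟩
          · exact ⟨l, Or.inl rfl, v, hv, key subset_union_left hL ha hz⟩)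
      exact ⟨(L', R'), ⟨hd', hL', hR'⟩, union_subset hL'U hR'U⟩)
  obtain ⟨Λ, hΛ, hΛL⟩ := exists_joinedIn_of_disjoint_arcs (L := fun n => (s n).1)
    (R := fun n => (s n).2) hVo hVcl hbasis (by simp [hs0]) (fun n => (hsP n).2.1)
    (fun n => (hsP n).2.2) (fun n => (hsP n).1) hsR
  obtain ⟨Q, hQ, hQR⟩ := exists_joinedIn_of_disjoint_arcs (L := fun n => (s n).2)
    (R := fun n => (s n).1) hVo hVcl hbasis (by simp [hs0]) (fun n => (hsP n).2.2)
    (fun n => (hsP n).2.1) (fun n => (hsP n).1.symm) (fun n => by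
      have := hsR n
      rwa [union_comm (s (n + 1)).1, union_comm (s n).1] at this)
  obtain ⟨A, hAΛ, hA⟩ := hΛ.exists_isArc
  obtain ⟨B, hBQ, hB⟩ := hQ.exists_isArc
  have hAB : A ∩ B ⊆ {p} := by
    rintro z ⟨hzA, hzB⟩
    rcases hAΛ hzA with h | h
    · exact h
    rcases hBQ hzB with h' | h'
    · exact h'
    obtain ⟨n, hn⟩ := hΛL z h
    obtain ⟨m, hm⟩ := hQR z h'
    exact absurd (hm (max n m) (le_max_right _ _))
      (disjoint_left.1 (hsP (max n m)).1 (hn _ (le_max_left _ _)))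
  exact hT.exists_of_isArc (hA.trans hB.symm hAB) hl.1 hr.1 (Or.inl hA.right_mem) hpT

end Closure

theorem retraction_of_isClosed
    {X : Type} [MetricSpace X] [LocallyConnectedSpace X]
    {T : Set X} (hT : IsClosed T) (r : X → X)
    (hfix : ∀ x ∈ T, r x = x)
    (hbd : ∀ x ∉ T, frontier (connectedComponentIn Tᶜ x) = {r x}) :
    Continuous r ∧ ∀ x, r x ∈ T := by
  have hopen : ∀ x, IsOpen (connectedComponentIn Tᶜ x) :=
    fun x => hT.isOpen_compl.connectedComponentIn
  have hfr : ∀ x ∉ T, r x ∈ frontier (connectedComponentIn Tᶜ x) := fun x hx => by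
    rw [hbd x hx]; rfl
  have hmem : ∀ x, r x ∈ T := by
    intro x
    by_cases hx : x ∈ T
    · rwa [hfix x hx]
    by_contra hr
    have h1 := hfr x hx
    have h2 : r x ∈ connectedComponentIn Tᶜ (r x) := mem_connectedComponentIn hr
    obtain ⟨z, hz, hz'⟩ := mem_closure_iff.1 h1.1 _ (hopen (r x)) h2
    have e1 := connectedComponentIn_eq hz
    have e2 := connectedComponentIn_eq hz'
    rw [e1, ← e2] at h2
    rw [(hopen x).frontier_eq] at h1
    exact h1.2 h2
  refine ⟨continuous_iff_continuousAt.2 fun x => ?_, hmem⟩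
  by_cases hx : x ∈ T
  · intro W hW
    rw [hfix x hx] at hW
    obtain ⟨V, hVW, hVo, hxV, hV⟩ :=
      locallyConnectedSpace_iff_subsets_isOpen_isConnected.1 ‹_› x W hW
    refine Filter.mem_map.2 (Filter.mem_of_superset (hVo.mem_nhds hxV) fun y hy => hVW ?_)
    by_cases hyT : y ∈ T
    · rwa [hfix y hyT]
    have h := hV.isPreconnected.inter_frontier_nonempty (t := connectedComponentIn Tᶜ y)
      ⟨y, hy, mem_connectedComponentIn hyT⟩
      ⟨x, hxV, fun h => connectedComponentIn_subset _ _ h hx⟩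
    rw [hbd y hyT] at h
    obtain ⟨z, hz, rfl⟩ := h
    exact hz
  · have : ∀ y ∈ connectedComponentIn Tᶜ x, r x = r y := by
      intro y hy
      have e := hbd y (connectedComponentIn_subset _ _ hy)
      rw [← connectedComponentIn_eq hy, hbd x hx] at e
      exact singleton_injective e
    refine (continuousAt_const (y := r x)).congr ?_
    exact Filter.mem_of_superset ((hopen x).mem_nhds (mem_connectedComponentIn hx)) this

section Maximal

variable {X : Type}

theorem IsJordanCurve.image_val [TopologicalSpace X] {K : Set X} {J : Set K}
    (hJ : IsJordanCurve J) : IsJordanCurve (Subtype.val '' J) :=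
  hJ.map fun φ => φ.trans (IsEmbedding.subtypeVal.homeomorphImage J)

theorem IsJordanCurve.preimage_val [TopologicalSpace X] {K J : Set X}
    (hJ : IsJordanCurve J) (hJK : J ⊆ K) : IsJordanCurve (Subtype.val ⁻¹' J : Set K) := by
  have himg : (Subtype.val '' (Subtype.val ⁻¹' J : Set K)) = J := by
    rw [Subtype.image_preimage_coe, inter_eq_right.2 hJK]
  exact hJ.map fun φ => (φ.trans (Homeomorph.setCongr himg.symm)).trans
    (IsEmbedding.subtypeVal.homeomorphImage _).symm

theorem CyclicallyConnected.image_val [TopologicalSpace X] {K : Set X} {C : Set K}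
    (hC : CyclicallyConnected C) : CyclicallyConnected (Subtype.val '' C) := by
  rintro _ ⟨x, hx, rfl⟩ _ ⟨y, hy, rfl⟩
  obtain ⟨J, hJC, hJ, hxJ, hyJ⟩ := hC x hx y hy
  exact ⟨_, image_mono hJC, hJ.image_val, mem_image_of_mem _ hxJ, mem_image_of_mem _ hyJ⟩

theorem CyclicallyConnected.preimage_val [TopologicalSpace X] {K T : Set X}
    (hT : CyclicallyConnected T) (hTK : T ⊆ K) :
    CyclicallyConnected (Subtype.val ⁻¹' T : Set K) := by
  intro x hx y hy
  obtain ⟨J, hJT, hJ, hxJ, hyJ⟩ := hT x hx y hy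
  exact ⟨_, preimage_mono hJT, hJ.preimage_val (hJT.trans hTK), hxJ, hyJ⟩

variable [MetricSpace X]

/-- If the components of the complement of `T` have one boundary point, then an arc with end
points in the closure of `T` stays there. -/
theorem IsArc.subset_closure_of_frontier [LocallyConnectedSpace X] {S T : Set X} {x y : X}
    {r : X → X} (hS : IsArc S x y) (hx : x ∈ closure T) (hy : y ∈ closure T)
    (hbd : ∀ x ∉ T, frontier (connectedComponentIn Tᶜ x) = {r x}) : S ⊆ closure T := by
  intro z hz
  by_contra hzK
  have hzT : z ∉ T := fun h => hzK (subset_closure h)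
  have hfr := hbd z hzT
  set C := connectedComponentIn Tᶜ z with hC
  have hzC : z ∈ C := mem_connectedComponentIn hzT
  have hrz : r z ≠ z := by
    intro h
    have h1 : z ∈ frontier C := by rw [hfr, h]; rfl
    refine h1.2 (mem_interior.2 ⟨connectedComponentIn (closure T)ᶜ z, ?_,
      isClosed_closure.isOpen_compl.connectedComponentIn, mem_connectedComponentIn hzK⟩)
    exact connectedComponentIn_mono _ (compl_subset_compl.2 subset_closure)
  have hcross : ∀ {A : Set X} {w : X}, IsArc A w z → w ∈ closure T → r z ∈ A := by
    intro A w hA hw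
    by_cases hwC : w ∈ C
    · have h1 : w ∈ frontier C := by
        rw [frontier_eq_closure_inter_closure]
        refine ⟨subset_closure hwC, closure_mono ?_ hw⟩
        exact subset_compl_comm.1 (connectedComponentIn_subset _ _)
      rw [hfr] at h1
      exact h1 ▸ hA.left_mem
    · have h1 := hA.isPreconnected.inter_frontier_nonempty (t := C) ⟨z, hA.right_mem, hzC⟩
        ⟨w, hA.left_mem, hwC⟩
      rw [hfr] at h1
      obtain ⟨q, hq, rfl⟩ := h1
      exact hq
  obtain ⟨A, B, hA, hB, -, hAB⟩ := hS.split hz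
  exact hrz (hAB.subset ⟨hcross hA hx, hcross hB.symm hy⟩)

theorem locallyPathConnectedSpace_subtype [LocallyPathConnectedSpace X] {K : Set X}
    (hK : ∀ S x y, IsArc S x y → x ∈ K → y ∈ K → S ⊆ K) : LocallyPathConnectedSpace K := by
  refine LocallyPathConnectedSpace.of_bases
    (p := fun x (W : Set X) => IsOpen W ∧ IsPathConnected W ∧ (x : X) ∈ W)
    (s := fun _ W => Subtype.val ⁻¹' W) (fun x => ⟨fun U => ⟨fun hU => ?_, ?_⟩⟩) ?_
  · obtain ⟨O, hO, hOU⟩ := mem_nhds_subtype K x U |>.1 hU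
    obtain ⟨W, hWO, hW⟩ := exists_isOpen_isPathConnected_subset hO
    exact ⟨W, hW, (preimage_mono hWO).trans hOU⟩
  · rintro ⟨W, ⟨hWo, -, hxW⟩, hWU⟩
    exact Filter.mem_of_superset ((hWo.preimage continuous_subtype_val).mem_nhds hxW) hWU
  · rintro x W ⟨-, hWc, hxW⟩
    have hpc : IsPathConnected (W ∩ K) := by
      rw [isPathConnected_iff]
      refine ⟨⟨x, hxW, x.2⟩, fun a ha b hb => ?_⟩
      obtain ⟨S, hSW, hS⟩ := (hWc.joinedIn a ha.1 b hb.1).exists_isArc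
      exact hS.joinedIn.mono (subset_inter hSW (hK S a b hS ha.2 hb.2))
    have := hpc.preimage_coe inter_subset_right
    rwa [preimage_inter, Subtype.coe_preimage_self, inter_univ] at this

theorem MaximalCyclic.isClosed [CompactSpace X] [LocallyConnectedSpace X] {T : Set X}
    (hT : MaximalCyclic T) {r : X → X}
    (hbd : ∀ x ∉ T, frontier (connectedComponentIn Tᶜ x) = {r x}) : IsClosed T := by
  have : LocallyPathConnectedSpace X := locallyPathConnectedSpace_of_compact
  have : LocallyPathConnectedSpace (closure T) := locallyPathConnectedSpace_subtype
    fun S x y hS hx hy => hS.subset_closure_of_frontier hx hy hbd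
  have : CompactSpace (closure T) := isCompact_iff_compactSpace.1 isClosed_closure.isCompact
  have himg : Subtype.val '' (Subtype.val ⁻¹' T : Set (closure T)) = T := by
    rw [Subtype.image_preimage_coe, inter_eq_right.2 subset_closure]
  have hdense : Dense (Subtype.val ⁻¹' T : Set (closure T)) := by
    rw [Subtype.dense_iff, himg]
  refine isClosed_of_closure_subset fun p hp => ?_
  by_contra hpT
  obtain ⟨C, hC, hTC, hpC⟩ := (hT.2.1.preimage_val subset_closure).exists_of_dense hdense
    (p := ⟨p, hp⟩) hpT
  have hmax := hT.2.2 _ hC.image_val (himg.ge.trans (image_mono hTC))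
  exact hpT (hmax ▸ mem_image_of_mem Subtype.val hpC)

end Maximal

/-- The natural retraction of a Peano space onto a maximal cyclic subset `T`
(identity on `T`, and sending each connected component of `X \ T` to the unique
boundary point of that component) is continuous; in particular `T` is a retract
of `X`. -/
theorem continuous_retraction_onto_maximalCyclic
    (X : Type) [MetricSpace X] [CompactSpace X] [ConnectedSpace X] [LocallyConnectedSpace X]
    (T : Set X) (hT : MaximalCyclic T) (r : X → X)
    (hfix : ∀ x ∈ T, r x = x)
    (hbd : ∀ x ∉ T, frontier (connectedComponentIn Tᶜ x) = {r x}) :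
    Continuous r ∧ ∀ x, r x ∈ T := by
  exact retraction_of_isClosed (hT.isClosed hbd) r hfix hbd
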